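/- arXiv:1903.12353 — 3 statements merged into one kernel-verified Lean document; each statement's English description precedes it below -/
import Mathlib

section
/- For all s in N and t in N_0 there exists a constant D > 0 such that the following holds: for every m in N and every digital net P over F_2 with n x m generating matrices satisfying mu_1(P^perp) >= m - t + 1 (i.e., P is a digital (t, m, s)-net over F_2), int_{[0,1]^s} (L_2(P + delta))^2 d delta <= D m^{s-1} / 2^{2m}, where + denotes the digital shift. -/
open MeasureTheory Finset Matrix

noncomputable section

/-- The `i`-th `b`-adic digit of a natural number `k`. -/
def ndigit (b k i : ℕ) : ℕ := k / b ^ i % b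

/-- The truncated digit vector `ν_n(k) ∈ F_b^n`. -/
def digitVec (b n : ℕ) (k : ℕ) : Fin n → ZMod b := fun i => (ndigit b k i.val : ZMod b)

/-- The dual net of the digital net with generating matrices `C_1,...,C_s ∈ F_b^{n×m}`. -/
def dualNet {s n m : ℕ} (b : ℕ) (C : Fin s → Matrix (Fin n) (Fin m) (ZMod b)) :
    Set (Fin s → ℕ) :=
  {k | ∑ j, (C j)ᵀ.mulVec (digitVec b n (k j)) = 0}

/-- The list of positions (in decreasing order) of the nonzero `b`-adic digits of `k`;
position `i` corresponds to the digit of `b^i`, i.e. to the exponent `c - 1` in the paper. -/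
def nzPos (b k : ℕ) : List ℕ :=
  (((Finset.range k).filter fun i => ndigit b k i ≠ 0).sort (· ≤ ·)).reverse

/-- The Dick weight function `μ_α` (for `α = 1` the NRT weight). -/
def dickWeight (b α k : ℕ) : ℕ := (((nzPos b k).take α).map (· + 1)).sum

/-- The Dick weight of a vector of nonnegative integers. -/
def dickWeightV (b α : ℕ) {s : ℕ} (k : Fin s → ℕ) : ℕ := ∑ j, dickWeight b α (k j)

/-- `μ_α(P^⊥)`, the minimal Dick weight over nonzero elements of the dual net. -/
def minWeight {s n m : ℕ} (b α : ℕ) (C : Fin s → Matrix (Fin n) (Fin m) (ZMod b)) : ℕ :=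
  sInf (dickWeightV b α '' {k | k ∈ dualNet b C ∧ k ≠ 0})

/-- The list `κ_1 b^{c_1-1}, κ_2 b^{c_2-1}, ...` of nonzero terms of the `b`-adic
expansion of `k`, in decreasing order of the exponents. -/
def nzTerms (b k : ℕ) : List ℕ := (nzPos b k).map fun i => ndigit b k i * b ^ i

/-- `k^{(p)}`: the number `k` with its `p` most significant nonzero digits removed. -/
def trunc (b p k : ℕ) : ℕ := ((nzTerms b k).drop p).sum

/-- The term `κ_p b^{c_p-1}` (with the convention `κ_0 b^{c_0-1} = 0`). -/
def topTerm (b p k : ℕ) : ℕ := if p = 0 then 0 else (nzTerms b k).getD (p - 1) 0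

/-- `(k,l)` is of type `(p,q)`. -/
def IsType (b p q k l : ℕ) : Prop :=
  if k = l then p = 0 ∧ q = 0
  else trunc b p k = trunc b q l ∧ topTerm b p k ≠ topTerm b q l

/-- `(k,l) ∈ T_{≥ α}`: `(k,l)` is of type `(p,q)` for some `p + q ≥ α`. -/
def TGe (b α k l : ℕ) : Prop := ∃ p q : ℕ, α ≤ p + q ∧ IsType b p q k l

/-- `(k,l) ∈ T_{≥ α}` for vectors: some coordinate pair lies in `T_{≥ α}`. -/
def TGeV (b α : ℕ) {s : ℕ} (k l : Fin s → ℕ) : Prop := ∃ j, TGe b α (k j) (l j)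

/-- The `(i+1)`-st `b`-adic digit `ξ_{i+1}` of `x ∈ [0,1]` (for `x ≠ 1` the unique expansion
with infinitely many digits different from `b-1`; for `x = 1` all digits equal `b-1`). -/
def rdigit (b : ℕ) (x : ℝ) (i : ℕ) : ℕ :=
  if x = 1 then b - 1 else (⌊x * (b : ℝ) ^ (i + 1)⌋).toNat % b

/-- The `k`-th `b`-adic Walsh function. -/
def walsh (b k : ℕ) (x : ℝ) : ℂ :=
  Complex.exp (2 * (Real.pi : ℂ) * Complex.I *
    ((∑ i ∈ Finset.range k, ndigit b k i * rdigit b x i : ℕ) : ℂ) / (b : ℂ))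

/-- The multivariate `b`-adic Walsh function. -/
def walshV (b : ℕ) {s : ℕ} (k : Fin s → ℕ) (x : Fin s → ℝ) : ℂ := ∏ j, walsh b (k j) (x j)

/-- The unit cube `[0,1]^s`. -/
def cube (s : ℕ) : Set (Fin s → ℝ) := Set.univ.pi fun _ => Set.Icc 0 1

/-- The `(k,l)`-th Walsh coefficient of a kernel `K : [0,1]^s × [0,1]^s → ℝ`. -/
def walshCoeff (b : ℕ) {s : ℕ} (K : (Fin s → ℝ) → (Fin s → ℝ) → ℝ) (k l : Fin s → ℕ) : ℂ :=
  ∫ x in cube s, ∫ y in cube s,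
    (K x y : ℂ) * (starRingEnd ℂ) (walshV b k x) * walshV b l y

/-- The `b`-adic digital shift `x ⊕ y` of reals `x, y ∈ [0,1]`. -/
def dshift (b : ℕ) (x y : ℝ) : ℝ :=
  ∑' i : ℕ, (((rdigit b x i + rdigit b y i) % b : ℕ) : ℝ) / (b : ℝ) ^ (i + 1)

/-- Componentwise digital shift of vectors in `[0,1]^s`. -/
def dshiftV (b : ℕ) {s : ℕ} (x y : Fin s → ℝ) : Fin s → ℝ := fun j => dshift b (x j) (y j)

/-- The `h`-th point of the digital net with generating matrices `C_1,...,C_s ∈ F_b^{n×m}`. -/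
def netPoint {s n m : ℕ} (b : ℕ) (C : Fin s → Matrix (Fin n) (Fin m) (ZMod b)) (h : ℕ) :
    Fin s → ℝ :=
  fun j => ∑ i : Fin n, (((C j).mulVec (digitVec b m h) i).val : ℝ) / (b : ℝ) ^ (i.val + 1)

open Classical in
/-- The squared `L_2`-discrepancy of the point multiset `pts 0, ..., pts (N-1)` in `[0,1]^s`. -/
def sqL2 {s : ℕ} (N : ℕ) (pts : ℕ → (Fin s → ℝ)) : ℝ :=
  ∫ y in cube s,
    ((∑ h ∈ Finset.range N, if ∀ j, 0 ≤ pts h j ∧ pts h j < y j then (1 : ℝ) else 0) / N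
      - ∏ j, y j) ^ 2

/-- The Bernoulli polynomial `B_r` evaluated at a real `x`. -/
def bpoly (r : ℕ) (x : ℝ) : ℝ := Polynomial.aeval x (Polynomial.bernoulli r)

/-- The one-dimensional reproducing kernel `K_α` of the Sobolev space of smoothness `α`. -/
def sobKer1 (α : ℕ) (x y : ℝ) : ℝ :=
  ∑ r ∈ Finset.range (α + 1), bpoly r x * bpoly r y / ((r.factorial : ℝ)) ^ 2
    + (-1 : ℝ) ^ (α + 1) * bpoly (2 * α) |x - y| / ((2 * α).factorial : ℝ)

/-- The `s`-fold product kernel `K_{α,s}`. -/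
def sobKer (α : ℕ) {s : ℕ} (x y : Fin s → ℝ) : ℝ := ∏ j, sobKer1 α (x j) (y j)

/-- The constant `C_{τ,b}`. -/
def Ctau (b τ : ℕ) : ℝ :=
  if τ ≤ 1 then 1 / (2 * Real.sin (Real.pi / b))
  else (1 + 1 / (b : ℝ) + 1 / ((b : ℝ) * ((b : ℝ) + 1))) ^ (τ - 2)
      / (2 * Real.sin (Real.pi / b)) ^ τ

end

/-!
By Warnock's formula, `L₂(P)²` is a double sum over pairs of points of products of one-dimensional
terms `1 - max xⱼ x'ⱼ`, plus terms whose mean over digital shifts does not depend on the points,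
because a digital shift by a point with finitely many digits preserves Lebesgue measure. In base
`2`, the mean of `1 - max` over the shifts is `1/2 - 2^{-k-2}` if the two coordinates first differ
in digit `k` (counted from `0`), that is, `∑_{i ≤ k} 2^{-i-2}`: a weighted count of the levels `i`
at which the first `i` digits agree. The mean squared discrepancy is thus a weighted sum over boxes
`∏ⱼ [0, 2^{-iⱼ})` of the proportion of points of the net in the box, minus `3^{-s}`.

Put `M = m - t`. As `μ₁(P^⊥) > M`, the first `iⱼ` rows of the matrices `Cⱼ` are jointly linearly
independent whenever `∑ iⱼ ≤ M`, and the proportion is exactly `2^{-∑ iⱼ}`; these boxes contribute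
at most `∏ⱼ ∑_i 4^{-i-1} = 3^{-s}`. Each other box has proportion at most `2^{-M}` and weight at
most `2^{-∑ iⱼ}`; as levels above `M + 1` may be merged, those boxes contribute at most
`(M + 2)^{s-1} 2^{-2M}`.
-/

section RealDigits

lemma measurable_rdigit (b i : ℕ) : Measurable fun y => rdigit b y i := by
  unfold rdigit
  refine Measurable.ite (measurableSet_singleton 1) measurable_const ?_
  exact (Measurable.of_discrete (f := fun z : ℤ => z.toNat % b)).comp
    (Int.measurable_floor.comp (measurable_id.mul_const _))

variable {b : ℕ} [NeZero b]

lemma rdigit_of_mem_Ico {y : ℝ} (hy : y ∈ Set.Ico (0 : ℝ) 1) (i : ℕ) :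
    rdigit b y i = Real.digits y b i := by
  simp [rdigit, hy.2.ne, Real.digits, Int.floor_toNat]

lemma add_div_mem_Ico {d : ℕ} (hd : d < b) {x : ℝ} (hx : x ∈ Set.Ico (0 : ℝ) 1) :
    (d + x) / b ∈ Set.Ico (0 : ℝ) 1 := by
  have hb : (0 : ℝ) < b := by exact_mod_cast NeZero.pos b
  have hd' : (d : ℝ) + 1 ≤ b := by exact_mod_cast hd
  exact ⟨div_nonneg (add_nonneg d.cast_nonneg hx.1) hb.le,
    (div_lt_one hb).2 (by linarith [hx.2])⟩

lemma rdigit_add_div_zero {d : ℕ} (hd : d < b) {x : ℝ} (hx : x ∈ Set.Ico (0 : ℝ) 1) :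
    rdigit b ((d + x) / b) 0 = d := by
  have hb : (b : ℝ) ≠ 0 := NeZero.ne _
  have hfloor : ⌊(d : ℝ) + x⌋₊ = d := by
    rw [Nat.floor_eq_iff (add_nonneg d.cast_nonneg hx.1)]
    exact ⟨by linarith [hx.1], by linarith [hx.2]⟩
  rw [rdigit_of_mem_Ico (add_div_mem_Ico hd hx), Real.digits, Fin.val_ofNat, zero_add, pow_one,
    div_mul_cancel₀ _ hb, hfloor, Nat.mod_eq_of_lt hd]

lemma rdigit_add_div_succ {d : ℕ} (hd : d < b) {x : ℝ} (hx : x ∈ Set.Ico (0 : ℝ) 1) (i : ℕ) :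
    rdigit b ((d + x) / b) (i + 1) = rdigit b x i := by
  have hb : (b : ℝ) ≠ 0 := NeZero.ne _
  have hscale : (d + x) / b * (b : ℝ) ^ (i + 1 + 1)
      = x * (b : ℝ) ^ (i + 1) + (b * (d * b ^ i) : ℕ) := by
    push_cast
    field_simp
    ring
  rw [rdigit_of_mem_Ico (add_div_mem_Ico hd hx), rdigit_of_mem_Ico hx, Real.digits, Real.digits,
    Fin.val_ofNat, Fin.val_ofNat, hscale,
    Nat.floor_add_natCast (mul_nonneg hx.1 (by positivity)), Nat.add_mul_mod_self_left]

end RealDigits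

section DigitalShift

variable {b : ℕ} [NeZero b]

lemma dshift_eq_ofDigits (x y : ℝ) :
    dshift b x y = Real.ofDigits fun i => Fin.ofNat b (rdigit b x i + rdigit b y i) := by
  simp only [dshift, Real.ofDigits, Real.ofDigitsTerm, Fin.val_ofNat, div_eq_mul_inv]

lemma dshift_mem_Icc (x y : ℝ) : dshift b x y ∈ Set.Icc (0 : ℝ) 1 := by
  rw [dshift_eq_ofDigits]
  exact ⟨Real.ofDigits_nonneg _, Real.ofDigits_le_one _⟩

lemma measurable_dshift (x : ℝ) : Measurable (dshift b x) := by
  rw [funext (dshift_eq_ofDigits x)]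
  refine Real.continuous_ofDigits.measurable.comp (measurable_pi_lambda _ fun i => ?_)
  exact (Measurable.of_discrete (f := fun r => Fin.ofNat b (rdigit b x i + r))).comp
    (measurable_rdigit b i)

lemma dshift_add_div {e d : ℕ} (he : e < b) (hd : d < b) {x y : ℝ}
    (hx : x ∈ Set.Ico (0 : ℝ) 1) (hy : y ∈ Set.Ico (0 : ℝ) 1) :
    dshift b ((e + x) / b) ((d + y) / b) = (((e + d) % b : ℕ) + dshift b x y) / b := by
  rw [dshift_eq_ofDigits, Real.ofDigits_eq_sum_add_ofDigits _ 1, dshift_eq_ofDigits]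
  simp only [sum_range_one, Real.ofDigitsTerm, rdigit_add_div_zero he hx, rdigit_add_div_zero hd hy,
    rdigit_add_div_succ he hx, rdigit_add_div_succ hd hy, Fin.val_ofNat, zero_add, pow_one]
  ring

lemma zero_dshift (hb : 1 < b) {y : ℝ} (hy : y ∈ Set.Ico (0 : ℝ) 1) : dshift b 0 y = y := by
  have hdigits : (fun i => Fin.ofNat b (rdigit b 0 i + rdigit b y i)) = Real.digits y b := by
    funext i
    ext
    rw [Fin.val_ofNat, rdigit_of_mem_Ico hy, rdigit_of_mem_Ico ⟨le_rfl, one_pos⟩]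
    simp [Real.digits]
  rw [dshift_eq_ofDigits, hdigits, Real.ofDigits_digits hb hy]

end DigitalShift

/-- The real number `0.v₀v₁…v_{n-1}` in base `b`; the coordinates of the points of a digital net
are of this form. -/
noncomputable def digitPoint (b : ℕ) {n : ℕ} (v : Fin n → ZMod b) : ℝ :=
  ∑ i : Fin n, ((v i).val : ℝ) / (b : ℝ) ^ (i.val + 1)

section DigitPoint

lemma digitPoint_succ {b n : ℕ} (v : Fin (n + 1) → ZMod b) :
    digitPoint b v = ((v 0).val + digitPoint b (Fin.tail v)) / b := by
  simp only [digitPoint, Fin.sum_univ_succ, add_div, sum_div, Fin.tail, Fin.val_succ, Fin.val_zero,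
    zero_add, pow_one, div_div, ← pow_succ]

variable {b n : ℕ} [NeZero b]

lemma digitPoint_mem_Ico (v : Fin n → ZMod b) : digitPoint b v ∈ Set.Ico (0 : ℝ) 1 := by
  induction n with
  | zero => simp [digitPoint]
  | succ n ih =>
    rw [digitPoint_succ]
    exact add_div_mem_Ico (ZMod.val_lt _) (ih _)

lemma dshift_digitPoint_add_div (v : Fin (n + 1) → ZMod b) (d : ZMod b) {y : ℝ}
    (hy : y ∈ Set.Ico (0 : ℝ) 1) :
    dshift b (digitPoint b v) ((d.val + y) / b) =
      ((v 0 + d).val + dshift b (digitPoint b (Fin.tail v)) y) / b := by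
  rw [digitPoint_succ, dshift_add_div (ZMod.val_lt _) (ZMod.val_lt _) (digitPoint_mem_Ico _) hy,
    ZMod.val_add]

end DigitPoint

/-- Lebesgue measure on the unit interval, as a measure on `ℝ`. -/
noncomputable abbrev unitLebesgue : Measure ℝ := volume.restrict (Set.Icc 0 1)

section UnitLebesgue

instance isProbabilityMeasure_unitLebesgue : IsProbabilityMeasure unitLebesgue :=
  ⟨by simp⟩

lemma unitLebesgue_eq_restrict_Ico : unitLebesgue = volume.restrict (Set.Ico 0 1) :=
  (Measure.restrict_congr_set Ico_ae_eq_Icc).symm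

lemma ae_unitLebesgue_mem_Ico : ∀ᵐ y ∂unitLebesgue, y ∈ Set.Ico (0 : ℝ) 1 := by
  rw [unitLebesgue_eq_restrict_Ico]
  exact ae_restrict_mem measurableSet_Ico

lemma restrict_cube (s : ℕ) :
    (volume : Measure (Fin s → ℝ)).restrict (cube s) = Measure.pi fun _ => unitLebesgue := by
  rw [volume_pi, cube, Measure.restrict_pi_pi]

lemma restrict_Ico_eq_sum_restrict {c : ℝ} (hc : 0 ≤ c) (k : ℕ) :
    volume.restrict (Set.Ico 0 (k * c)) =
      ∑ d ∈ range k, volume.restrict (Set.Ico (d * c) ((d + 1) * c)) := by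
  induction k with
  | zero => simp
  | succ k ih =>
    have hk : (k : ℝ) * c ≤ (k + 1) * c := by nlinarith
    rw [sum_range_succ, ← ih, ← Measure.restrict_union
      Set.Ico_disjoint_Ico_same measurableSet_Ico,
      Set.Ico_union_Ico_eq_Ico (by positivity) hk, Nat.cast_succ]

variable {b : ℕ} [NeZero b]

lemma restrict_Ico_eq_map_add_div (d : ℕ) :
    volume.restrict (Set.Ico (d * (b : ℝ)⁻¹) ((d + 1) * (b : ℝ)⁻¹)) =
      (b : ENNReal)⁻¹ • Measure.map (fun y : ℝ => (d + y) / b) unitLebesgue := by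
  have hb : (0 : ℝ) < b := by exact_mod_cast NeZero.pos b
  have hφ : MeasurableEmbedding fun y : ℝ => (d + y) / b :=
    (measurableEmbedding_mulRight₀ (inv_ne_zero hb.ne')).comp (measurableEmbedding_addLeft _)
  have hmap : Measure.map (fun y : ℝ => (d + y) / b) volume = (b : ENNReal) • volume := by
    change Measure.map ((· * (b : ℝ)⁻¹) ∘ ((d : ℝ) + ·)) volume = _
    rw [← Measure.map_map (by fun_prop) (by fun_prop), map_add_left_eq_self,
      Real.map_volume_mul_right (inv_ne_zero hb.ne'), inv_inv, abs_of_pos hb,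
      ENNReal.ofReal_natCast]
  have hpre : (fun y : ℝ => (d + y) / b) ⁻¹' Set.Ico (d * (b : ℝ)⁻¹) ((d + 1) * (b : ℝ)⁻¹) =
      Set.Ico 0 1 := by
    ext y
    simp [div_eq_mul_inv, hb]
  rw [unitLebesgue_eq_restrict_Ico, ← hpre, ← hφ.restrict_map, hmap, Measure.restrict_smul,
    smul_smul, ENNReal.inv_mul_cancel (NeZero.ne _) (ENNReal.natCast_ne_top b), one_smul]

variable (b) in
lemma unitLebesgue_eq_average_map_add_div :
    unitLebesgue = (b : ENNReal)⁻¹ •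
      ∑ d : ZMod b, Measure.map (fun y : ℝ => (d.val + y) / b) unitLebesgue := by
  have hb : (b : ℝ) ≠ 0 := NeZero.ne _
  have hsum (μ : ℕ → Measure ℝ) : ∑ d : ZMod b, μ d.val = ∑ d ∈ range b, μ d := by
    obtain ⟨k, rfl⟩ := Nat.exists_eq_succ_of_ne_zero (NeZero.ne b)
    exact Fin.sum_univ_eq_sum_range μ (k + 1)
  conv_lhs => rw [unitLebesgue_eq_restrict_Ico, ← mul_inv_cancel₀ hb,
    restrict_Ico_eq_sum_restrict (by positivity)]
  simp only [restrict_Ico_eq_map_add_div, ← smul_sum]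
  rw [hsum fun d => Measure.map (fun y : ℝ => (d + y) / b) unitLebesgue]

lemma integral_unitLebesgue_eq_average {f : ℝ → ℝ} (hf : Measurable f)
    (hfi : Integrable f unitLebesgue) :
    ∫ y, f y ∂unitLebesgue = (∑ d : ZMod b, ∫ y, f ((d.val + y) / b) ∂unitLebesgue) / b := by
  have hmeas (d : ZMod b) : AEMeasurable (fun y : ℝ => (d.val + y) / b) unitLebesgue := by
    fun_prop
  have hint : ∀ d ∈ (univ : Finset (ZMod b)), Integrable f
      (Measure.map (fun y : ℝ => (d.val + y) / b) unitLebesgue) := by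
    rw [unitLebesgue_eq_average_map_add_div b, integrable_smul_measure
      (ENNReal.inv_ne_zero.2 (ENNReal.natCast_ne_top b)) (ENNReal.inv_ne_top.2 (NeZero.ne _)),
      integrable_finsetSum_measure] at hfi
    exact hfi
  conv_lhs => rw [unitLebesgue_eq_average_map_add_div b, integral_smul_measure,
    integral_finsetSum_measure hint]
  rw [ENNReal.toReal_inv, ENNReal.toReal_natCast, smul_eq_mul, div_eq_inv_mul]
  exact congrArg _ (sum_congr rfl fun d _ => integral_map (hmeas d) hf.aestronglyMeasurable)

/-- Inductively, a digital shift permutes the `b` scaled copies of the unit interval. -/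
lemma measurePreserving_dshift_digitPoint (hb : 1 < b) {n : ℕ} (v : Fin n → ZMod b) :
    MeasurePreserving (dshift b (digitPoint b v)) unitLebesgue unitLebesgue := by
  induction n with
  | zero =>
    refine ⟨measurable_dshift _, (Measure.map_congr ?_).trans Measure.map_id⟩
    filter_upwards [ae_unitLebesgue_mem_Ico] with y hy
    simp [digitPoint, zero_dshift hb hy]
  | succ n ih =>
    refine ⟨measurable_dshift _, ?_⟩
    have hmap (d : ZMod b) : Measure.map (dshift b (digitPoint b v))
        (Measure.map (fun y : ℝ => (d.val + y) / b) unitLebesgue) =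
          Measure.map (fun y : ℝ => ((v 0 + d).val + y) / b) unitLebesgue := by
      rw [Measure.map_map (measurable_dshift _) (by fun_prop)]
      conv_rhs => rw [← (ih (Fin.tail v)).map_eq]
      rw [Measure.map_map (by fun_prop) (measurable_dshift _)]
      refine Measure.map_congr ?_
      filter_upwards [ae_unitLebesgue_mem_Ico] with y hy
      exact dshift_digitPoint_add_div v d hy
    conv_lhs => rw [unitLebesgue_eq_average_map_add_div b]
    rw [Measure.map_smul, Measure.map_finset_sum (measurable_dshift _).aemeasurable]
    simp only [hmap]
    conv_rhs => rw [unitLebesgue_eq_average_map_add_div b]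
    exact congrArg _ (Equiv.sum_comp (Equiv.addLeft (v 0)) fun d : ZMod b =>
      Measure.map (fun y : ℝ => (d.val + y) / b) unitLebesgue)

end UnitLebesgue

section Moments

lemma integral_unitLebesgue_eq_intervalIntegral (f : ℝ → ℝ) :
    ∫ y, f y ∂unitLebesgue = ∫ y in (0 : ℝ)..1, f y := by
  rw [intervalIntegral.integral_of_le zero_le_one, integral_Icc_eq_integral_Ioc]

lemma ite_lt_eq_indicator (p : ℝ) (f : ℝ → ℝ) :
    (fun y => if p < y then f y else 0) = (Set.Ioi p).indicator f := by
  ext y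
  simp [Set.indicator]

lemma integral_ite_lt {p : ℝ} (hp : p ∈ Set.Icc (0 : ℝ) 1) (f : ℝ → ℝ) :
    ∫ y, (if p < y then f y else 0) ∂unitLebesgue = ∫ y in p..1, f y := by
  have hset : Set.Ioi p ∩ Set.Icc 0 1 = Set.Ioc p 1 := by
    ext y
    constructor
    · exact fun h => ⟨h.1, h.2.2⟩
    · exact fun h => ⟨h.1, hp.1.trans h.1.le, h.2⟩
  rw [ite_lt_eq_indicator, integral_indicator measurableSet_Ioi, unitLebesgue,
    Measure.restrict_restrict measurableSet_Ioi, hset, intervalIntegral.integral_of_le hp.2]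

lemma integrable_ite_lt (p : ℝ) {f : ℝ → ℝ} (hf : Continuous f) :
    Integrable (fun y => if p < y then f y else 0) unitLebesgue := by
  rw [ite_lt_eq_indicator]
  exact (hf.integrableOn_Icc (μ := volume)).indicator measurableSet_Ioi

variable {b n : ℕ} [NeZero b]

lemma integrable_comp_dshift {f : ℝ → ℝ} (hf : Continuous f) (x : ℝ) :
    Integrable (fun y => f (dshift b x y)) unitLebesgue := by
  obtain ⟨c, hc⟩ := isCompact_Icc.exists_bound_of_continuousOn (hf.continuousOn (s := Set.Icc 0 1))
  exact Integrable.of_bound (hf.measurable.comp (measurable_dshift x)).aestronglyMeasurable c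
    (ae_of_all _ fun y => hc _ (dshift_mem_Icc x y))

lemma integral_comp_dshift_digitPoint (hb : 1 < b) {f : ℝ → ℝ} (hf : Continuous f)
    (v : Fin n → ZMod b) :
    ∫ y, f (dshift b (digitPoint b v) y) ∂unitLebesgue = ∫ y, f y ∂unitLebesgue := by
  have hT := measurePreserving_dshift_digitPoint hb v
  rw [← integral_map hT.measurable.aemeasurable hf.aestronglyMeasurable, hT.map_eq]

end Moments

/-- The expression `N⁻² ∑_{h,h'} ∏_j a_{h,h',j} - 2 N⁻¹ ∑_h ∏_j b_{h,j} + ∏_j c_j` shared by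
Warnock's formula for the squared `L_2`-discrepancy and by its average over digital shifts. -/
noncomputable def warnockSum {s : ℕ} (N : ℕ) (a : ℕ → ℕ → Fin s → ℝ) (b : ℕ → Fin s → ℝ)
    (c : Fin s → ℝ) : ℝ :=
  (∑ h ∈ range N, ∑ h' ∈ range N, ∏ j, a h h' j) / N ^ 2 - 2 * (∑ h ∈ range N, ∏ j, b h j) / N
    + ∏ j, c j

section Warnock

variable {s : ℕ}

lemma integral_warnockSum {μ : Measure ℝ} [SigmaFinite μ] (N : ℕ)
    {a : ℕ → ℕ → Fin s → ℝ → ℝ} {b : ℕ → Fin s → ℝ → ℝ} {c : Fin s → ℝ → ℝ}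
    (ha : ∀ h h' j, Integrable (a h h' j) μ) (hb : ∀ h j, Integrable (b h j) μ)
    (hc : ∀ j, Integrable (c j) μ) :
    ∫ x, warnockSum N (fun h h' j => a h h' j (x j)) (fun h j => b h j (x j)) (fun j => c j (x j))
        ∂Measure.pi (fun _ => μ) =
      warnockSum N (fun h h' j => ∫ y, a h h' j y ∂μ) (fun h j => ∫ y, b h j y ∂μ)
        (fun j => ∫ y, c j y ∂μ) := by
  have hA := fun h h' => Integrable.fintype_prod (μ := fun _ : Fin s => μ) (ha h h')
  have hB := fun h => Integrable.fintype_prod (μ := fun _ : Fin s => μ) (hb h)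
  have hC := Integrable.fintype_prod (μ := fun _ : Fin s => μ) hc
  have hA' := fun h => integrable_finsetSum (range N) fun h' _ => hA h h'
  have hA'' := (integrable_finsetSum (range N) fun h _ => hA' h).div_const ((N : ℝ) ^ 2)
  have hB' := ((integrable_finsetSum (range N) fun h _ => hB h).const_mul 2).div_const (N : ℝ)
  simp only [warnockSum]
  calc
    _ = _ - _ + _ := by
      rw [integral_add (by exact hA''.sub hB') hC, integral_sub hA'' hB']
    _ = _ := by
      rw [integral_div, integral_div, integral_const_mul, integral_finsetSum _ fun h _ => hA' h,
        integral_finsetSum _ fun h _ => hB h]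
      simp only [integral_finsetSum _ fun h' _ => hA _ h', integral_fintype_prod_eq_prod]

lemma sq_discrepancy_eq_warnockSum (N : ℕ) {p : ℕ → Fin s → ℝ}
    (hp : ∀ h j, 0 ≤ p h j) (y : Fin s → ℝ)
    [∀ h, Decidable (∀ j, 0 ≤ p h j ∧ p h j < y j)] :
    ((∑ h ∈ range N, if ∀ j, 0 ≤ p h j ∧ p h j < y j then (1 : ℝ) else 0) / N - ∏ j, y j) ^ 2 =
      warnockSum N (fun h h' j => if max (p h j) (p h' j) < y j then 1 else 0)
        (fun h j => if p h j < y j then y j else 0) (fun j => y j ^ 2) := by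
  have hbox (h : ℕ) : (if ∀ j, 0 ≤ p h j ∧ p h j < y j then (1 : ℝ) else 0) =
      ∏ j, if p h j < y j then 1 else 0 := by
    simp [prod_ite_zero, hp]
  have hpair (h h' : ℕ) (j : Fin s) : (if max (p h j) (p h' j) < y j then (1 : ℝ) else 0) =
      (if p h j < y j then 1 else 0) * if p h' j < y j then 1 else 0 := by
    rw [ite_zero_mul_ite_zero, one_mul]
    simp only [max_lt_iff]
  have hmul (h : ℕ) (j : Fin s) :
      (if p h j < y j then y j else 0) = (if p h j < y j then 1 else 0) * y j := by
    rw [ite_mul, one_mul, zero_mul]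
  simp only [warnockSum, hbox, hpair, hmul, prod_mul_distrib, ← sum_mul_sum, ← sum_mul, prod_pow]
  ring

/-- Warnock's formula. -/
lemma sqL2_eq_warnockSum (N : ℕ) {p : ℕ → Fin s → ℝ} (hp : ∀ h j, p h j ∈ Set.Icc (0 : ℝ) 1) :
    sqL2 N p = warnockSum N (fun h h' j => 1 - max (p h j) (p h' j))
      (fun h j => (1 - p h j ^ 2) / 2) (fun _ => 1 / 3) := by
  have hmax (h h' : ℕ) (j : Fin s) : max (p h j) (p h' j) ∈ Set.Icc (0 : ℝ) 1 :=
    ⟨le_max_of_le_left (hp h j).1, max_le (hp h j).2 (hp h' j).2⟩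
  simp only [sqL2, sq_discrepancy_eq_warnockSum N fun h j => (hp h j).1]
  rw [restrict_cube, integral_warnockSum N
    (a := fun h h' j y => if max (p h j) (p h' j) < y then 1 else 0)
    (b := fun h j y => if p h j < y then y else 0) (c := fun _ y => y ^ 2)
    (fun h h' j => integrable_ite_lt _ continuous_const)
    (fun h j => integrable_ite_lt _ continuous_id)
    (fun _ => (by fun_prop : Continuous fun y : ℝ => y ^ 2).integrableOn_Icc)]
  simp only [integral_ite_lt (hmax _ _ _), integral_ite_lt (hp _ _),
    integral_unitLebesgue_eq_intervalIntegral]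
  norm_num

end Warnock

/-- The mean of `1 - max (x + δ) (x' + δ)` over digital shifts `δ`, where `x` and `x'` have the
base `b` digits `v` and `w`, i.e. the average length of the intersection of `[x + δ, 1]` and
`[x' + δ, 1]`. -/
noncomputable def meanOverlap (b : ℕ) {n : ℕ} (v w : Fin n → ZMod b) : ℝ :=
  ∫ y, (1 - max (dshift b (digitPoint b v) y) (dshift b (digitPoint b w) y)) ∂unitLebesgue

/-- Shifted points are uniformly distributed, which makes the last two terms of Warnock's formula
independent of the point set. -/
lemma integral_sqL2_dshiftV {b : ℕ} [NeZero b] (hb : 1 < b) {s n N : ℕ} (hN : N ≠ 0)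
    (v : ℕ → Fin s → Fin n → ZMod b) :
    ∫ δ in cube s, sqL2 N (fun h => dshiftV b (fun j => digitPoint b (v h j)) δ) =
      (∑ h ∈ range N, ∑ h' ∈ range N, ∏ j, meanOverlap b (v h j) (v h' j)) / N ^ 2
        - (1 / 3) ^ s := by
  have hsq (δ : Fin s → ℝ) :=
    sqL2_eq_warnockSum N (p := fun h => dshiftV b (fun j => digitPoint b (v h j)) δ)
      fun h j => dshift_mem_Icc _ _
  have hmean (h : ℕ) (j : Fin s) :
      ∫ y, (1 - dshift b (digitPoint b (v h j)) y ^ 2) / 2 ∂unitLebesgue = 1 / 3 := by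
    rw [integral_comp_dshift_digitPoint hb (f := fun y => (1 - y ^ 2) / 2) (by fun_prop),
      integral_unitLebesgue_eq_intervalIntegral, intervalIntegral.integral_div,
      intervalIntegral.integral_sub (by simp) (by simp)]
    norm_num
  have hint (x x' : ℝ) :
      Integrable (fun y => 1 - max (dshift b x y) (dshift b x' y)) unitLebesgue :=
    (integrable_const 1).sub ((integrable_comp_dshift continuous_id x).sup
      (integrable_comp_dshift continuous_id x'))
  simp only [hsq, dshiftV]
  rw [restrict_cube, integral_warnockSum N (fun h h' j => hint _ _)
    (fun h j => integrable_comp_dshift (f := fun y => (1 - y ^ 2) / 2) (by fun_prop) _)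
    (fun _ => integrable_const (1 / 3))]
  simp only [hmean, warnockSum, meanOverlap, integral_const, probReal_univ, one_smul, prod_const,
    card_univ, Fintype.card_fin, sum_const, card_range, nsmul_eq_mul]
  field_simp
  ring

section MeanOverlap

variable {n : ℕ}

lemma integrable_abs_dshift_sub {b : ℕ} [NeZero b] (x x' : ℝ) :
    Integrable (fun y => |dshift b x y - dshift b x' y|) unitLebesgue :=
  ((integrable_comp_dshift continuous_id x).sub (integrable_comp_dshift continuous_id x')).abs

lemma integral_dshift_digitPoint {b : ℕ} [NeZero b] (hb : 1 < b) (v : Fin n → ZMod b) :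
    ∫ y, dshift b (digitPoint b v) y ∂unitLebesgue = 1 / 2 := by
  rw [integral_comp_dshift_digitPoint hb (f := fun y => y) continuous_id,
    integral_unitLebesgue_eq_intervalIntegral, integral_id]
  norm_num

lemma integral_abs_dshift_sub_succ {b : ℕ} [NeZero b] (v w : Fin (n + 1) → ZMod b) :
    ∫ y, |dshift b (digitPoint b v) y - dshift b (digitPoint b w) y| ∂unitLebesgue =
      (∑ d : ZMod b, ∫ y, |(((v 0 + d).val : ℝ) - (w 0 + d).val) +
        (dshift b (digitPoint b (Fin.tail v)) y - dshift b (digitPoint b (Fin.tail w)) y)|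
          ∂unitLebesgue) / (b : ℝ) ^ 2 := by
  have hb : (0 : ℝ) < b := by exact_mod_cast NeZero.pos b
  rw [integral_unitLebesgue_eq_average (b := b)
    (by exact ((measurable_dshift _).sub (measurable_dshift _)).abs)
    (integrable_abs_dshift_sub _ _), sq, ← div_div]
  refine congrArg (· / (b : ℝ)) ?_
  rw [sum_div]
  refine sum_congr rfl fun d _ => ?_
  rw [← integral_div]
  refine integral_congr_ae ?_
  filter_upwards [ae_unitLebesgue_mem_Ico] with y hy
  rw [dshift_digitPoint_add_div v d hy, dshift_digitPoint_add_div w d hy, ← sub_div, abs_div,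
    abs_of_pos hb]
  ring_nf

lemma val_add_sub_val_add_of_ne {a c : ZMod 2} (h : a ≠ c) (d : ZMod 2) :
    ((a + d).val : ℝ) - (c + d).val = 1 ∨ ((a + d).val : ℝ) - (c + d).val = -1 := by
  have hval : ∀ a c d : ZMod 2, a ≠ c →
      (a + d).val = (c + d).val + 1 ∨ (c + d).val = (a + d).val + 1 := by decide
  rcases hval a c d h with h | h <;> simp [h]

/-- When the leading digits differ, the two shifted points lie in different halves of `[0, 1]`,
so that the sign of their difference is known and only the means of the points matter. -/
lemma integral_abs_dshift_sub_of_ne {v w : Fin (n + 1) → ZMod 2} (h : v 0 ≠ w 0) :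
    ∫ y, |dshift 2 (digitPoint 2 v) y - dshift 2 (digitPoint 2 w) y| ∂unitLebesgue = 1 / 2 := by
  have habs {e x y : ℝ} (he : e = 1 ∨ e = -1) (hx : x ∈ Set.Icc (0 : ℝ) 1)
      (hy : y ∈ Set.Icc (0 : ℝ) 1) : |e + (x - y)| = 1 + e * (x - y) := by
    obtain ⟨hx0, hx1⟩ := hx
    obtain ⟨hy0, hy1⟩ := hy
    rcases he with rfl | rfl
    · rw [abs_of_nonneg (by linarith), one_mul]
    · rw [abs_of_nonpos (by linarith)]
      ring
  have hT (u : Fin n → ZMod 2) : Integrable (dshift 2 (digitPoint 2 u)) unitLebesgue :=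
    integrable_comp_dshift continuous_id _
  have hhalf {e : ℝ} (he : e = 1 ∨ e = -1) : ∫ y, |e + (dshift 2 (digitPoint 2 (Fin.tail v)) y -
      dshift 2 (digitPoint 2 (Fin.tail w)) y)| ∂unitLebesgue = 1 := by
    simp only [habs he (dshift_mem_Icc _ _) (dshift_mem_Icc _ _)]
    rw [integral_add (integrable_const 1) (by exact ((hT _).sub (hT _)).const_mul e),
      integral_const_mul, integral_sub (hT _) (hT _), integral_dshift_digitPoint one_lt_two,
      integral_dshift_digitPoint one_lt_two]
    simp
  rw [integral_abs_dshift_sub_succ]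
  simp only [hhalf (val_add_sub_val_add_of_ne h _), sum_const, card_univ, ZMod.card]
  norm_num

lemma integral_abs_dshift_sub (v w : Fin n → ZMod 2) (k : Fin n)
    (hlt : ∀ r < k, v r = w r) (hne : v k ≠ w k) :
    ∫ y, |dshift 2 (digitPoint 2 v) y - dshift 2 (digitPoint 2 w) y| ∂unitLebesgue =
      (1 / 2) ^ (k.val + 1) := by
  induction n with
  | zero => exact k.elim0
  | succ n ih =>
    cases k using Fin.cases with
    | zero => simpa using integral_abs_dshift_sub_of_ne hne
    | succ k =>
      have htail := ih (Fin.tail v) (Fin.tail w) k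
        (fun r hr => hlt r.succ (Fin.succ_lt_succ_iff.2 hr)) hne
      rw [integral_abs_dshift_sub_succ, hlt 0 (Fin.succ_pos k)]
      simp only [sub_self, zero_add, htail, sum_const, card_univ, ZMod.card, Fin.val_succ,
        nsmul_eq_mul, Nat.cast_ofNat]
      ring

lemma meanOverlap_eq (v w : Fin n → ZMod 2) :
    meanOverlap 2 v w = 1 / 2 -
      (∫ y, |dshift 2 (digitPoint 2 v) y - dshift 2 (digitPoint 2 w) y| ∂unitLebesgue) / 2 := by
  have hmax (a c : ℝ) : 1 - max a c = 1 - a / 2 - c / 2 - |a - c| / 2 := by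
    rcases le_total a c with h | h
    · rw [max_eq_right h, abs_of_nonpos (sub_nonpos.2 h)]
      ring
    · rw [max_eq_left h, abs_of_nonneg (sub_nonneg.2 h)]
      ring
  have hv (x : ℝ) := (integrable_comp_dshift (b := 2) continuous_id x).div_const 2
  have h1 := (integrable_const (μ := unitLebesgue) (1 : ℝ)).sub (hv (digitPoint 2 v))
  simp only [id] at hv h1
  simp only [meanOverlap, hmax]
  rw [integral_sub (by exact h1.sub (hv _)) ((integrable_abs_dshift_sub _ _).div_const 2),
    integral_sub (by exact h1) (hv _), integral_sub (integrable_const 1) (hv _), integral_div,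
    integral_div, integral_div, integral_dshift_digitPoint one_lt_two,
    integral_dshift_digitPoint one_lt_two, integral_const, probReal_univ, one_smul]
  ring

lemma meanOverlap_nonneg {b : ℕ} [NeZero b] (v w : Fin n → ZMod b) : 0 ≤ meanOverlap b v w :=
  integral_nonneg fun _ => sub_nonneg.2 (max_le (dshift_mem_Icc _ _).2 (dshift_mem_Icc _ _).2)

lemma meanOverlap_le_half (v w : Fin n → ZMod 2) : meanOverlap 2 v w ≤ 1 / 2 := by
  have hgap : 0 ≤ ∫ y, |dshift 2 (digitPoint 2 v) y - dshift 2 (digitPoint 2 w) y|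
      ∂unitLebesgue := integral_nonneg fun y => abs_nonneg _
  rw [meanOverlap_eq]
  linarith

lemma meanOverlap_of_first_ne {v w : Fin n → ZMod 2} {k : Fin n} (hlt : ∀ r < k, v r = w r)
    (hne : v k ≠ w k) : meanOverlap 2 v w = 1 / 2 - (1 / 2) ^ (k.val + 2) := by
  rw [meanOverlap_eq, integral_abs_dshift_sub v w k hlt hne]
  ring

end MeanOverlap

/-- The digit vector `v` starts with (at least) `i` zeros, i.e. the point `0.v₀v₁…` lies in
`[0, b^{-i})`. -/
def VanishesBelow {b n : ℕ} (v : Fin n → ZMod b) (i : ℕ) : Prop :=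
  ∀ r : Fin n, r.val < i → v r = 0

lemma VanishesBelow.mono {b n i i' : ℕ} {v : Fin n → ZMod b} (h : VanishesBelow v i')
    (hi : i ≤ i') : VanishesBelow v i :=
  fun r hr => h r (hr.trans_le hi)

instance {b n : ℕ} (v : Fin n → ZMod b) (i : ℕ) : Decidable (VanishesBelow v i) :=
  inferInstanceAs (Decidable (∀ r : Fin n, r.val < i → v r = 0))

/-- The weights in the expansion of the mean overlap into indicators of `VanishesBelow`, truncated
at level `L`: the weights of all levels `i ≥ L` of the series with weights `(1 / 2) ^ (i + 2)` are
put on level `L`. -/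
noncomputable def levelWeight (L i : ℕ) : ℝ :=
  if i < L then (1 / 2) ^ (i + 2) else (1 / 2) ^ (i + 1)

section LevelWeight

lemma levelWeight_nonneg (L i : ℕ) : 0 ≤ levelWeight L i := by
  unfold levelWeight
  split_ifs <;> positivity

lemma levelWeight_le (L i : ℕ) : levelWeight L i ≤ (1 / 2) ^ i := by
  unfold levelWeight
  split_ifs <;> exact pow_le_pow_of_le_one (by norm_num) (by norm_num) (by omega)

lemma levelWeight_mul_half_pow {L i : ℕ} (hi : i < L) :
    levelWeight L i * (1 / 2) ^ i = (1 / 4) ^ (i + 1) := by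
  rw [levelWeight, if_pos hi, ← pow_add, show (1 / 4 : ℝ) = (1 / 2) ^ 2 by norm_num, ← pow_mul]
  ring_nf

lemma sum_levelWeight_of_le {L k : ℕ} (hk : k ≤ L) :
    ∑ i ∈ range k, levelWeight L i = 1 / 2 - (1 / 2) ^ (k + 1) := by
  induction k with
  | zero => norm_num
  | succ k ih =>
    rw [sum_range_succ, ih (by omega), levelWeight, if_pos (by omega)]
    ring

lemma sum_levelWeight (L : ℕ) : ∑ i ∈ range (L + 1), levelWeight L i = 1 / 2 := by
  rw [sum_range_succ, sum_levelWeight_of_le le_rfl, levelWeight, if_neg (lt_irrefl L)]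
  ring

lemma meanOverlap_le_sum_levelWeight {n : ℕ} (L : ℕ) (v w : Fin n → ZMod 2) :
    meanOverlap 2 v w ≤
      ∑ i ∈ range (L + 1), levelWeight L i * if VanishesBelow (v - w) i then 1 else 0 := by
  by_cases h : VanishesBelow (v - w) L
  · calc meanOverlap 2 v w ≤ ∑ i ∈ range (L + 1), levelWeight L i := by
          rw [sum_levelWeight]
          exact meanOverlap_le_half v w
      _ = _ := sum_congr rfl fun i hi => by
          rw [if_pos (h.mono (mem_range_succ_iff.1 hi)), mul_one]
  · simp only [VanishesBelow, not_forall] at h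
    obtain ⟨r, hrL, hr⟩ := h
    obtain ⟨k, hk, hmin⟩ := wellFounded_lt.has_min {r | (v - w) r ≠ 0} ⟨r, hr⟩
    have hzero (r : Fin n) (hr : r < k) : (v - w) r = 0 := not_not.1 fun h => hmin r h hr
    have hkL : k.val < L := (Fin.le_def.1 (not_lt.1 (hmin r hr))).trans_lt hrL
    calc meanOverlap 2 v w = 1 / 2 - (1 / 2) ^ (k.val + 2) :=
          meanOverlap_of_first_ne (fun r hr => sub_eq_zero.1 (hzero r hr)) (sub_ne_zero.1 hk)
      _ = ∑ i ∈ range (k.val + 1), levelWeight L i := (sum_levelWeight_of_le hkL).symm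
      _ = ∑ i ∈ range (k.val + 1),
            levelWeight L i * if VanishesBelow (v - w) i then 1 else 0 := by
          refine sum_congr rfl fun i hi => ?_
          have hvan : VanishesBelow (v - w) i := fun r hr =>
            hzero r (Fin.lt_def.2 (hr.trans_le (mem_range_succ_iff.1 hi)))
          rw [if_pos hvan, mul_one]
      _ ≤ _ := by
          refine sum_le_sum_of_subset_of_nonneg (range_subset_range.2 (by omega)) fun i _ _ => ?_
          split_ifs <;> simp [levelWeight_nonneg]

end LevelWeight

section Digits

variable {b : ℕ}

lemma dickWeight_one_le {k a : ℕ} (h : ∀ r, a ≤ r → ndigit b k r = 0) : dickWeight b 1 k ≤ a := by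
  cases hl : nzPos b k with
  | nil => simp [dickWeight, hl]
  | cons r l =>
    have hr : r ∈ nzPos b k := by simp [hl]
    simp only [nzPos, List.mem_reverse, Finset.mem_sort, Finset.mem_filter] at hr
    have hra : r < a := not_le.1 fun har => hr.2 (h r har)
    simpa [dickWeight, hl] using hra

lemma dickWeight_one_pos (hb : 1 < b) {k : ℕ} (hk : k ≠ 0) : 0 < dickWeight b 1 k := by
  have hlead : Nat.log b k ∈ nzPos b k := by
    have hdigit : k / b ^ Nat.log b k < b :=
      Nat.div_lt_of_lt_mul (by rw [← pow_succ]; exact Nat.lt_pow_succ_log_self hb k)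
    rw [nzPos, List.mem_reverse, Finset.mem_sort, Finset.mem_filter, Finset.mem_range, ndigit,
      Nat.mod_eq_of_lt hdigit]
    exact ⟨Nat.log_lt_self b hk, (Nat.div_pos (Nat.pow_log_le_self b hk) (by positivity)).ne'⟩
  cases hl : nzPos b k with
  | nil => simp [hl] at hlead
  | cons r l => simp [dickWeight, hl]

lemma dickWeightV_one_pos (hb : 1 < b) {s : ℕ} {k : Fin s → ℕ} (hk : k ≠ 0) :
    0 < dickWeightV b 1 k := by
  obtain ⟨j, hj⟩ := Function.ne_iff.1 hk
  exact sum_pos' (fun _ _ => Nat.zero_le _) ⟨j, mem_univ j, dickWeight_one_pos hb hj⟩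

lemma lt_dickWeightV_of_le_minWeight (hb : 1 < b) {s n m t : ℕ}
    {C : Fin s → Matrix (Fin n) (Fin m) (ZMod b)} (hC : (m : ℤ) - t + 1 ≤ minWeight b 1 C)
    {k : Fin s → ℕ} (hk : k ∈ dualNet b C) (hk0 : k ≠ 0) : m - t < dickWeightV b 1 k := by
  have hmin : minWeight b 1 C ≤ dickWeightV b 1 k := Nat.sInf_le ⟨k, ⟨hk, hk0⟩, rfl⟩
  have hpos := dickWeightV_one_pos hb hk0
  omega

variable [NeZero b]

lemma digitVec_pow_self (n : ℕ) : digitVec b n (b ^ n) = 0 := by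
  funext r
  have hdvd : b ∣ b ^ n / b ^ r.val := by
    rw [Nat.pow_div r.2.le (NeZero.pos b)]
    exact dvd_pow_self b (by omega)
  simp [digitVec, ndigit, Nat.mod_eq_zero_of_dvd hdvd]

lemma bijective_digitVec (m : ℕ) : Function.Bijective fun h : Fin (b ^ m) => digitVec b m h := by
  rw [Fintype.bijective_iff_injective_and_card]
  refine ⟨fun h h' hh => finFunctionFinEquiv.symm.injective ?_, by simp⟩
  funext i
  ext
  have hi := congrArg ZMod.val (congrFun hh i)
  simpa [digitVec, ndigit, ZMod.val_natCast] using hi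

lemma sum_digitVec {M : Type*} [AddCommMonoid M] (m : ℕ) (F : (Fin m → ZMod b) → M) :
    ∑ h ∈ range (b ^ m), F (digitVec b m h) = ∑ ζ, F ζ := by
  rw [sum_range]
  exact (bijective_digitVec m).sum_comp F

lemma sum_sum_digitVec_sub {M : Type*} [AddCommMonoid M] (m : ℕ) (F : (Fin m → ZMod b) → M) :
    ∑ h ∈ range (b ^ m), ∑ h' ∈ range (b ^ m), F (digitVec b m h - digitVec b m h') =
      b ^ m • ∑ ζ, F ζ := by
  have hinner (η : Fin m → ZMod b) :
      ∑ h' ∈ range (b ^ m), F (η - digitVec b m h') = ∑ ζ, F ζ := by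
    rw [sum_digitVec m fun η' => F (η - η')]
    exact (Equiv.subLeft η).sum_comp F
  simp only [hinner, sum_const, card_range]

lemma exists_digitVec_eq_dickWeight_one_le {n a : ℕ} {u : Fin n → ZMod b}
    (hu : ∀ r : Fin n, a ≤ r → u r = 0) : ∃ k, digitVec b n k = u ∧ dickWeight b 1 k ≤ a := by
  obtain ⟨k, hk⟩ := (bijective_digitVec n).2 u
  refine ⟨k, hk, dickWeight_one_le fun r hr => ?_⟩
  rcases lt_or_ge r n with hrn | hrn
  · have hcast : (ndigit b k r : ZMod b) = 0 := (congrFun hk ⟨r, hrn⟩).trans (hu ⟨r, hrn⟩ hr)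
    exact Nat.eq_zero_of_dvd_of_lt ((ZMod.natCast_eq_zero_iff _ _).1 hcast)
      (Nat.mod_lt _ (NeZero.pos b))
  · rw [ndigit, Nat.div_eq_of_lt (k.2.trans_le (Nat.pow_le_pow_right (NeZero.pos b) hrn)),
      Nat.zero_mod]

end Digits

/-- The number of points of the digital net with generating matrices `C` in the elementary box
`∏ⱼ [0, b^{-iⱼ})`, counted through the digit vectors of their indices. -/
def boxCount {b s n m : ℕ} [NeZero b] (C : Fin s → Matrix (Fin n) (Fin m) (ZMod b))
    (i : Fin s → ℕ) : ℕ :=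
  #{ζ : Fin m → ZMod b | ∀ j, VanishesBelow (C j *ᵥ ζ) (i j)}

section BoxCount

variable {b s n m : ℕ} [NeZero b]

lemma boxCount_anti (C : Fin s → Matrix (Fin n) (Fin m) (ZMod b)) {i i' : Fin s → ℕ}
    (h : i' ≤ i) : boxCount C i ≤ boxCount C i' :=
  card_le_card <| monotone_filter_right _ fun _ _ hζ j => (hζ j).mono (h j)

lemma sum_sum_prod_vanishesBelow (C : Fin s → Matrix (Fin n) (Fin m) (ZMod b)) (i : Fin s → ℕ) :
    ∑ h ∈ range (b ^ m), ∑ h' ∈ range (b ^ m), ∏ j,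
      (if VanishesBelow (C j *ᵥ digitVec b m h - C j *ᵥ digitVec b m h') (i j) then (1 : ℝ) else 0)
      = b ^ m * boxCount C i := by
  simp only [← mulVec_sub, prod_ite_zero, prod_const_one]
  rw [sum_sum_digitVec_sub m fun ζ =>
    if ∀ j ∈ univ, VanishesBelow (C j *ᵥ ζ) (i j) then (1 : ℝ) else 0]
  simp [boxCount]

end BoxCount

section LeadingRows

lemma card_mulVec_eq_zero_mul_pow {K ι κ : Type*} [Field K] [Fintype K] [DecidableEq K]
    [Fintype ι] [Fintype κ] [DecidableEq κ] {R : Matrix ι κ K} (hR : LinearIndependent K R.row) :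
    #{ζ : κ → K | R *ᵥ ζ = 0} * Fintype.card K ^ Fintype.card ι =
      Fintype.card K ^ Fintype.card κ := by
  have hker : #{ζ : κ → K | R *ᵥ ζ = 0} =
      Fintype.card K ^ Module.finrank K (LinearMap.ker R.mulVecLin) := by
    rw [← Nat.card_eq_fintype_card, ← Module.natCard_eq_pow_finrank, ← Fintype.card_subtype,
      ← Nat.card_eq_fintype_card]
    rfl
  have hrank := LinearMap.finrank_range_add_finrank_ker R.mulVecLin
  rw [Module.finrank_fintype_fun_eq_card] at hrank
  rw [hker, ← pow_add, ← hrank, ← hR.rank_matrix, Matrix.rank, add_comm]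

/-- The matrix whose rows are the first `iⱼ` rows of each generating matrix `Cⱼ`. -/
def leadingRows {R : Type*} {s n m : ℕ} (C : Fin s → Matrix (Fin n) (Fin m) R) {i : Fin s → ℕ}
    (hin : ∀ j, i j ≤ n) : Matrix ((j : Fin s) × Fin (i j)) (Fin m) R :=
  .of fun p => C p.1 (p.2.castLE (hin p.1))

lemma vecMul_leadingRows {R : Type*} [CommSemiring R] {s n m : ℕ}
    (C : Fin s → Matrix (Fin n) (Fin m) R) {i : Fin s → ℕ} (hin : ∀ j, i j ≤ n)
    (u : (j : Fin s) × Fin (i j) → R) :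
    u ᵥ* leadingRows C hin =
      ∑ j, (C j)ᵀ *ᵥ Function.extend (Fin.castLE (hin j)) (fun r => u ⟨j, r⟩) 0 := by
  funext c
  simp only [Matrix.mulVec_transpose, Finset.sum_apply, vecMul, dotProduct, Fintype.sum_sigma]
  refine sum_congr rfl fun j _ => ?_
  have hinj := Fin.castLE_injective (hin j)
  refine Fintype.sum_of_injective _ hinj _ _ (fun r hr => ?_) fun r => ?_
  · rw [Function.extend_apply' _ _ _ hr, Pi.zero_apply, zero_mul]
  · rw [hinj.extend_apply]
    rfl

lemma leadingRows_mulVec_eq_zero {b s n m : ℕ} (C : Fin s → Matrix (Fin n) (Fin m) (ZMod b))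
    {i : Fin s → ℕ} (hin : ∀ j, i j ≤ n) (ζ : Fin m → ZMod b) :
    leadingRows C hin *ᵥ ζ = 0 ↔ ∀ j, VanishesBelow (C j *ᵥ ζ) (i j) := by
  simp only [funext_iff, Sigma.forall, VanishesBelow]
  exact forall_congr' fun j =>
    ⟨fun h r hr => h ⟨r, hr⟩, fun h r => h (r.castLE (hin j)) r.2⟩

variable {b s n m M : ℕ} [Fact b.Prime] {C : Fin s → Matrix (Fin n) (Fin m) (ZMod b)}

/-- The vector with single nonzero entry `b ^ n` lies in the dual net and has weight `n + 1`. -/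
lemma le_of_lt_dickWeightV (hM : ∀ k ∈ dualNet b C, k ≠ 0 → M < dickWeightV b 1 k) (j : Fin s) :
    M ≤ n := by
  have hb : 1 < b := (Fact.out : b.Prime).one_lt
  have hmem : Pi.single j (b ^ n) ∈ dualNet b C := by
    refine sum_eq_zero fun j' _ => ?_
    rcases eq_or_ne j' j with rfl | hj
    · simp [digitVec_pow_self]
    · have hzero : digitVec b n 0 = 0 := by
        funext r
        simp [digitVec, ndigit]
      simp [hj, hzero]
  have hdigits (r : ℕ) (hr : n + 1 ≤ r) : ndigit b (b ^ n) r = 0 := by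
    rw [ndigit, Nat.div_eq_of_lt (Nat.pow_lt_pow_right hb hr), Nat.zero_mod]
  have hweight : dickWeightV b 1 (Pi.single j (b ^ n)) = dickWeight b 1 (b ^ n) := by
    rw [dickWeightV, sum_eq_single j (fun j' _ hj => by simp [hj, dickWeight, nzPos]) (by simp),
      Pi.single_eq_same]
  have hlt := hM _ hmem (by simp [NeZero.ne])
  exact Nat.lt_succ_iff.1 ((hweight ▸ hlt).trans_le (dickWeight_one_le hdigits))

/-- A linear dependency between these rows, read as digit vectors, is an element of the dual net of
weight at most `∑ j, i j`. -/
lemma linearIndependent_leadingRows (hM : ∀ k ∈ dualNet b C, k ≠ 0 → M < dickWeightV b 1 k)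
    {i : Fin s → ℕ} (hi : ∑ j, i j ≤ M) (hin : ∀ j, i j ≤ n) :
    LinearIndependent (ZMod b) (leadingRows C hin).row := by
  rw [← Matrix.vecMul_injective_iff]
  refine (injective_iff_map_eq_zero (leadingRows C hin).vecMulLinear).2 fun u hu => ?_
  have hinj (j : Fin s) := Fin.castLE_injective (hin j)
  choose k hk hkweight using fun j =>
    exists_digitVec_eq_dickWeight_one_le (a := i j)
      (u := Function.extend (Fin.castLE (hin j)) (fun r => u ⟨j, r⟩) 0) fun r hr =>
        Function.extend_apply' _ _ _ fun ⟨r', hr'⟩ => (hr' ▸ hr).not_gt r'.2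
  have hmem : k ∈ dualNet b C := by
    change ∑ j, (C j)ᵀ *ᵥ digitVec b n (k j) = 0
    simp only [hk, ← vecMul_leadingRows]
    exact hu
  have hk0 : k = 0 := by
    by_contra hne
    exact (hM k hmem hne).not_ge ((sum_le_sum fun j _ => hkweight j).trans hi)
  funext ⟨j, r⟩
  have hr := congrFun (hk j) (r.castLE (hin j))
  rw [(hinj j).extend_apply] at hr
  simpa [hk0, digitVec, ndigit] using hr.symm

lemma boxCount_mul_pow (hM : ∀ k ∈ dualNet b C, k ≠ 0 → M < dickWeightV b 1 k)
    {i : Fin s → ℕ} (hi : ∑ j, i j ≤ M) : boxCount C i * b ^ ∑ j, i j = b ^ m := by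
  have hin (j : Fin s) : i j ≤ n :=
    (single_le_sum (fun _ _ => Nat.zero_le _) (mem_univ j)).trans
      (hi.trans (le_of_lt_dickWeightV hM j))
  have hcount := card_mulVec_eq_zero_mul_pow (linearIndependent_leadingRows hM hi hin)
  simp only [Fintype.card_sigma, Fintype.card_fin, ZMod.card] at hcount
  rw [← hcount, boxCount]
  congr 2
  simp only [leadingRows_mulVec_eq_zero]

lemma boxCount_mul_pow_le (hM : ∀ k ∈ dualNet b C, k ≠ 0 → M < dickWeightV b 1 k)
    {i : Fin s → ℕ} (hi : M ≤ ∑ j, i j) : boxCount C i * b ^ M ≤ b ^ m := by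
  obtain ⟨i', hi', rfl⟩ : ∃ i' ≤ i, ∑ j, i' j = M := by
    obtain ⟨d, hd, hdM⟩ := Finsupp.exists_le_degree_eq (Finsupp.equivFunOnFinite.symm i) M
      (by simpa [Finsupp.degree_eq_sum] using hi)
    exact ⟨d, fun j => hd j, by simpa [Finsupp.degree_eq_sum] using hdM⟩
  rw [← boxCount_mul_pow hM le_rfl]
  exact Nat.mul_le_mul_right _ (boxCount_anti C hi')

end LeadingRows

section Estimate

lemma sum_ite_lt_half_pow_le (L M S : ℕ) :
    ∑ a ∈ range L, (if M < a + S then (1 / 2 : ℝ) ^ (a + S) else 0) ≤ (1 / 2) ^ M := by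
  calc ∑ a ∈ range L, (if M < a + S then (1 / 2 : ℝ) ^ (a + S) else 0)
      = ∑ a ∈ Ico S (L + S) with M < a, (1 / 2 : ℝ) ^ a := by
        rw [range_eq_Ico, sum_Ico_add' (fun a => if M < a then (1 / 2 : ℝ) ^ a else 0), zero_add,
          sum_filter]
    _ ≤ ∑ a ∈ Ico (M + 1) (L + S), (1 / 2 : ℝ) ^ a := by
        refine sum_le_sum_of_subset_of_nonneg (fun a ha => ?_) fun _ _ _ => by positivity
        simp only [mem_filter, mem_Ico] at ha ⊢
        omega
    _ ≤ (1 / 2) ^ (M + 1) / (1 - 1 / 2) :=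
        geom_sum_Ico_le_of_lt_one (by norm_num) (by norm_num)
    _ = (1 / 2) ^ M := by ring

lemma sum_piFinset_ite_lt_half_pow_le (s L M : ℕ) :
    ∑ i ∈ Fintype.piFinset (fun _ : Fin (s + 1) => range L),
      (if M < ∑ j, i j then (1 / 2 : ℝ) ^ ∑ j, i j else 0) ≤ (L : ℝ) ^ s * (1 / 2) ^ M := by
  have hsplit : Fintype.piFinset (fun _ : Fin (s + 1) => range L) =
      (range L ×ˢ Fintype.piFinset fun _ : Fin s => range L).map
        (Fin.consEquiv fun _ => ℕ).toEmbedding := by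
    ext i
    simp [Fintype.mem_piFinset, Fin.forall_fin_succ, Finset.mem_map_equiv, Fin.consEquiv, Fin.tail]
  rw [hsplit, sum_map, sum_product_right]
  simp only [Equiv.coe_toEmbedding, Fin.consEquiv_apply, Fin.sum_cons]
  calc _ ≤ ∑ _i ∈ Fintype.piFinset (fun _ : Fin s => range L), (1 / 2 : ℝ) ^ M :=
        sum_le_sum fun i _ => sum_ite_lt_half_pow_le L M (∑ j, i j)
    _ = (L : ℝ) ^ s * (1 / 2) ^ M := by simp

lemma sum_piFinset_prod_quarter_pow_le (s L : ℕ) :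
    ∑ i ∈ Fintype.piFinset (fun _ : Fin s => range L), ∏ j, (1 / 4 : ℝ) ^ (i j + 1) ≤
      (1 / 3) ^ s := by
  have hgeom : ∑ i ∈ range L, (1 / 4 : ℝ) ^ (i + 1) ≤ 1 / 3 := by
    simp only [pow_succ, ← sum_mul]
    have h := geom_sum_Ico_le_of_lt_one (x := (1 / 4 : ℝ)) (m := 0) (n := L) (by norm_num)
      (by norm_num)
    rw [← range_eq_Ico] at h
    linarith
  rw [← prod_univ_sum (fun _ => range L) fun _ i => (1 / 4 : ℝ) ^ (i + 1), prod_const, card_univ,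
    Fintype.card_fin]
  exact pow_le_pow_left₀ (by positivity) hgeom s

variable {s n m M : ℕ}

lemma prod_levelWeight_mul_boxCount_le {C : Fin s → Matrix (Fin n) (Fin m) (ZMod 2)}
    (hM : ∀ k ∈ dualNet 2 C, k ≠ 0 → M < dickWeightV 2 1 k) (i : Fin s → ℕ) :
    (∏ j, levelWeight (M + 1) (i j)) * (boxCount C i / 2 ^ m) ≤
      ∏ j, (1 / 4 : ℝ) ^ (i j + 1) +
        (if M < ∑ j, i j then (1 / 2) ^ ∑ j, i j else 0) * (1 / 2) ^ M := by
  split_ifs with h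
  · have hcount : (boxCount C i : ℝ) * 2 ^ M ≤ 2 ^ m := by
      exact_mod_cast boxCount_mul_pow_le hM h.le
    have hfrac : (boxCount C i : ℝ) / 2 ^ m ≤ (1 / 2) ^ M := by
      rwa [_root_.one_div_pow, div_le_div_iff₀ (by positivity) (by positivity), one_mul]
    have hweight : ∏ j, levelWeight (M + 1) (i j) ≤ (1 / 2 : ℝ) ^ ∑ j, i j := by
      rw [← prod_pow_eq_pow_sum]
      exact prod_le_prod (fun j _ => levelWeight_nonneg _ _) fun j _ => levelWeight_le _ _
    calc _ ≤ (1 / 2 : ℝ) ^ (∑ j, i j) * (1 / 2) ^ M :=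
          mul_le_mul hweight hfrac (by positivity) (by positivity)
      _ ≤ _ := le_add_of_nonneg_left (by positivity)
  · have hcount : (boxCount C i : ℝ) * 2 ^ (∑ j, i j) = 2 ^ m := by
      exact_mod_cast boxCount_mul_pow hM (not_lt.1 h)
    have hfrac : (boxCount C i : ℝ) / 2 ^ m = ∏ j, (1 / 2) ^ i j := by
      rw [prod_pow_eq_pow_sum, _root_.one_div_pow, div_eq_div_iff (by positivity) (by positivity),
        one_mul, hcount]
    have hi (j : Fin s) : i j < M + 1 :=
      Nat.lt_succ_of_le
        ((single_le_sum (fun _ _ => Nat.zero_le _) (mem_univ j)).trans (not_lt.1 h))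
    simp only [hfrac, ← prod_mul_distrib, levelWeight_mul_half_pow (hi _), zero_mul, add_zero,
      le_refl]

lemma sum_sum_prod_meanOverlap_le (C : Fin s → Matrix (Fin n) (Fin m) (ZMod 2)) (L : ℕ) :
    ∑ h ∈ range (2 ^ m), ∑ h' ∈ range (2 ^ m),
        ∏ j, meanOverlap 2 (C j *ᵥ digitVec 2 m h) (C j *ᵥ digitVec 2 m h') ≤
      ∑ i ∈ Fintype.piFinset (fun _ : Fin s => range (L + 1)),
        (∏ j, levelWeight L (i j)) * (2 ^ m * boxCount C i) := by
  calc _ ≤ ∑ h ∈ range (2 ^ m), ∑ h' ∈ range (2 ^ m), ∏ j, ∑ i ∈ range (L + 1),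
        levelWeight L i *
          if VanishesBelow (C j *ᵥ digitVec 2 m h - C j *ᵥ digitVec 2 m h') i then 1 else 0 :=
        sum_le_sum fun h _ => sum_le_sum fun h' _ =>
          prod_le_prod (fun j _ => meanOverlap_nonneg _ _) fun j _ =>
            meanOverlap_le_sum_levelWeight L _ _
    _ = _ := by
        simp only [prod_univ_sum, prod_mul_distrib]
        rw [sum_congr rfl fun h _ => sum_comm, sum_comm]
        refine sum_congr rfl fun i _ => ?_
        simp only [← mul_sum]
        rw [sum_sum_prod_vanishesBelow]
        norm_cast

lemma integral_sqL2_dshiftV_netPoint_le {C : Fin (s + 1) → Matrix (Fin n) (Fin m) (ZMod 2)}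
    (hM : ∀ k ∈ dualNet 2 C, k ≠ 0 → M < dickWeightV 2 1 k) :
    ∫ δ in cube (s + 1), sqL2 (2 ^ m) (fun h => dshiftV 2 (netPoint 2 C h) δ) ≤
      ((M + 2 : ℕ) : ℝ) ^ s * ((1 / 2) ^ M * (1 / 2) ^ M) := by
  set B := Fintype.piFinset fun _ : Fin (s + 1) => range (M + 2)
  calc _ = (∑ h ∈ range (2 ^ m), ∑ h' ∈ range (2 ^ m), ∏ j,
          meanOverlap 2 (C j *ᵥ digitVec 2 m h) (C j *ᵥ digitVec 2 m h')) / ((2 ^ m : ℕ) : ℝ) ^ 2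
            - (1 / 3) ^ (s + 1) :=
        integral_sqL2_dshiftV one_lt_two (pow_ne_zero m two_ne_zero) fun h j =>
          C j *ᵥ digitVec 2 m h
    _ ≤ (∑ i ∈ B, (∏ j, levelWeight (M + 1) (i j)) * (2 ^ m * boxCount C i)) /
          ((2 ^ m : ℕ) : ℝ) ^ 2 - (1 / 3) ^ (s + 1) := by
        gcongr
        exact sum_sum_prod_meanOverlap_le C (M + 1)
    _ = ∑ i ∈ B, (∏ j, levelWeight (M + 1) (i j)) * (boxCount C i / 2 ^ m)
          - (1 / 3) ^ (s + 1) := by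
        rw [sum_div]
        congr! 2 with i
        push_cast
        field_simp
    _ ≤ ∑ i ∈ B, (∏ j, (1 / 4 : ℝ) ^ (i j + 1) +
          (if M < ∑ j, i j then (1 / 2) ^ ∑ j, i j else 0) * (1 / 2) ^ M)
            - (1 / 3) ^ (s + 1) := by
        gcongr with i
        exact prod_levelWeight_mul_boxCount_le hM i
    _ ≤ (1 / 3) ^ (s + 1) + ((M + 2 : ℕ) : ℝ) ^ s * (1 / 2) ^ M * (1 / 2) ^ M
          - (1 / 3) ^ (s + 1) := by
        rw [sum_add_distrib, ← sum_mul]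
        gcongr
        · exact sum_piFinset_prod_quarter_pow_le (s + 1) (M + 2)
        · exact sum_piFinset_ite_lt_half_pow_le s (M + 2) M
    _ = _ := by ring

end Estimate

/-- Theorem 5.4: the shift-averaged squared `L_2`-discrepancy of a digital `(t,m,s)`-net
over `F_2` is of order `m^{s-1}/2^{2m}`. -/
theorem stmt_12 (s : ℕ) (hs : 0 < s) (t : ℕ) :
    ∃ D : ℝ, 0 < D ∧
      ∀ m : ℕ, 0 < m → ∀ n : ℕ, ∀ C : Fin s → Matrix (Fin n) (Fin m) (ZMod 2),
        (m : ℤ) - t + 1 ≤ minWeight 2 1 C →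
        (∫ δ in cube s, sqL2 (2 ^ m) (fun h => dshiftV 2 (netPoint 2 C h) δ))
          ≤ D * (m : ℝ) ^ (s - 1) / 2 ^ (2 * m) := by
  obtain ⟨s, rfl⟩ : ∃ s', s = s' + 1 := ⟨s - 1, by omega⟩
  refine ⟨3 ^ s * 4 ^ t, by positivity, fun m hm n C hC => ?_⟩
  have hpow : ((m - t + 2 : ℕ) : ℝ) ^ s ≤ 3 ^ s * (m : ℝ) ^ s := by
    rw [← mul_pow]
    exact pow_le_pow_left₀ (by positivity) (by exact_mod_cast (by omega : m - t + 2 ≤ 3 * m)) s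
  have hscale : (1 / 2 : ℝ) ^ (m - t) ≤ 2 ^ t / 2 ^ m := by
    rw [_root_.one_div_pow, div_le_div_iff₀ (by positivity) (by positivity), one_mul, ← pow_add]
    exact pow_le_pow_right₀ one_le_two (by omega)
  calc _ ≤ ((m - t + 2 : ℕ) : ℝ) ^ s * ((1 / 2) ^ (m - t) * (1 / 2) ^ (m - t)) :=
        integral_sqL2_dshiftV_netPoint_le fun _ => lt_dickWeightV_of_le_minWeight one_lt_two hC
    _ ≤ 3 ^ s * (m : ℝ) ^ s * (2 ^ t / 2 ^ m * (2 ^ t / 2 ^ m)) := by gcongr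
    _ = 3 ^ s * 4 ^ t * (m : ℝ) ^ (s + 1 - 1) / 2 ^ (2 * m) := by
        rw [Nat.add_sub_cancel, show (4 : ℝ) = 2 * 2 by norm_num, mul_pow]
        ring
end

section
/- For all s in N and t_3 in N_0 there exists a constant D > 0 such that the following holds: for every m in N and every digital net P over F_2 with n x m generating matrices satisfying mu_3(P^perp) >= 3m - t_3 + 1 (i.e., P is an order 3 digital (t_3, m, s)-net over F_2), (L_2(P))^2 <= D m^{s-1} / 2^{2m}. -/
open MeasureTheory Finset Matrix

/-!
Replacing every coordinate by its leading `m` digits moves the local discrepancy by `O(b^{-m})`, so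
it suffices to bound the discrepancy of the boxes `[0, q / b^m)`. Their Walsh coefficients are, by
Poisson summation, sums over the dual net of products of one-dimensional coefficients, which vanish
unless the two indices agree below the leading digit of one of them and which decay like the inverse
of the larger index. Parseval's identity then leaves `∑ l, (∑ k, decay k l) ^ 2`. In the diagonal
terms the net property allows `O(m^{s-1} b^r)` indices of total level `m - t + r`, each
contributing `O(b^{-2(m - t + r)})`. For `k ≠ k'` in the dual net both agreeing with `l`, the
difference `k - k'` has few digits, so its order `3` weight forces one of `k`, `k'` to have
decay at most `b^{-(3m - t)/2}`, and the spare factor `b^{-m/2}` absorbs all powers of `m`.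
-/

noncomputable section

namespace DigitalNet

section FiniteFourier

variable {K X : Type*} [Fintype K] [Fintype X] [DecidableEq X] {χ : K → X → ℂ} {c : ℝ}

theorem sum_norm_sq_of_orthogonal
    (hχ : ∀ x x', ∑ k, χ k x * starRingEnd ℂ (χ k x') = if x = x' then (c : ℂ) else 0)
    (f : X → ℂ) : ∑ k, ‖∑ x, f x * χ k x‖ ^ 2 = c * ∑ x, ‖f x‖ ^ 2 := by
  have expand (k : K) : ((‖∑ x, f x * χ k x‖ ^ 2 : ℝ) : ℂ) =
      ∑ x, ∑ x', f x * starRingEnd ℂ (f x') * (χ k x * starRingEnd ℂ (χ k x')) := by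
    rw [Complex.ofReal_pow, ← Complex.mul_conj', map_sum, sum_mul_sum]
    exact sum_congr rfl fun x _ => sum_congr rfl fun x' _ => by rw [map_mul]; ring
  apply Complex.ofReal_injective
  calc ((∑ k, ‖∑ x, f x * χ k x‖ ^ 2 : ℝ) : ℂ)
      = ∑ x, ∑ x', f x * starRingEnd ℂ (f x') * ∑ k, χ k x * starRingEnd ℂ (χ k x') := by
        simp_rw [Complex.ofReal_sum, expand, mul_sum]
        rw [sum_comm]
        exact sum_congr rfl fun x _ => sum_comm
    _ = ((c * ∑ x, ‖f x‖ ^ 2 : ℝ) : ℂ) := by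
        simp_rw [hχ, mul_ite, mul_zero, sum_ite_eq, mem_univ, if_true, Complex.mul_conj']
        push_cast
        rw [← sum_mul, mul_comm]

theorem sum_fourier_mul_of_orthogonal
    (hχ : ∀ x x', ∑ k, χ k x * starRingEnd ℂ (χ k x') = if x = x' then (c : ℂ) else 0)
    (f : X → ℂ) (x : X) :
    ∑ k, (∑ x', f x' * starRingEnd ℂ (χ k x')) * χ k x = c * f x := by
  calc ∑ k, (∑ x', f x' * starRingEnd ℂ (χ k x')) * χ k x
      = ∑ x', f x' * ∑ k, χ k x * starRingEnd ℂ (χ k x') := by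
        simp_rw [sum_mul, mul_sum]
        rw [sum_comm]
        exact sum_congr rfl fun x' _ => sum_congr rfl fun k _ => by ring
    _ = c * f x := by simp [hχ, mul_comm]

end FiniteFourier

section Characters

variable {b s : ℕ} [NeZero b] {ι : Type*} [Fintype ι]

/-- The character `x ↦ exp (2πi (k ⬝ᵥ x) / b)` of `(ℤ/b)^ι`: the Walsh function with digit
vector `k`, read on digit vectors instead of real numbers. -/
def walshChar (k x : ι → ZMod b) : ℂ := ZMod.stdAddChar (k ⬝ᵥ x)

theorem walshChar_eq_prod (k x : ι → ZMod b) :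
    walshChar k x = ∏ i, (ZMod.stdAddChar (k i * x i) : ℂ) :=
  map_prod (ZMod.stdAddChar (N := b)).toMonoidHom (fun i => Multiplicative.ofAdd (k i * x i)) univ

theorem norm_walshChar (k x : ι → ZMod b) : ‖walshChar k x‖ = 1 :=
  AddChar.norm_apply _ _

theorem walshChar_zero_left (x : ι → ZMod b) : walshChar 0 x = 1 := by
  simp [walshChar]

theorem walshChar_comm (k x : ι → ZMod b) : walshChar k x = walshChar x k := by
  rw [walshChar, walshChar, dotProduct_comm]

theorem walshChar_mul_conj (k x x' : ι → ZMod b) :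
    walshChar k x * starRingEnd ℂ (walshChar k x') = walshChar k (x - x') := by
  rw [walshChar, walshChar, walshChar, ← AddChar.map_neg_eq_conj, ← AddChar.map_add_eq_mul,
    dotProduct_sub, sub_eq_add_neg]

theorem sum_walshChar [DecidableEq ι] (x : ι → ZMod b) :
    ∑ k, walshChar k x = if x = 0 then (b : ℂ) ^ Fintype.card ι else 0 := by
  have one_coordinate (i : ι) :
      ∑ a : ZMod b, (ZMod.stdAddChar (a * x i) : ℂ) = if x i = 0 then (b : ℂ) else 0 := by
    simp [AddChar.sum_mulShift (x i) (ZMod.isPrimitive_stdAddChar b)]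
  simp_rw [walshChar_eq_prod]
  rw [← Fintype.prod_sum fun i (a : ZMod b) => (ZMod.stdAddChar (a * x i) : ℂ),
    prod_congr rfl fun i _ => one_coordinate i, Finset.prod_ite_zero, prod_const]
  simp [funext_iff]

theorem sum_walshChar_mul_conj [DecidableEq ι] (x x' : ι → ZMod b) :
    ∑ k, walshChar k x * starRingEnd ℂ (walshChar k x') =
      if x = x' then (b : ℂ) ^ Fintype.card ι else 0 := by
  simp_rw [walshChar_mul_conj, sum_walshChar, sub_eq_zero]

/-- The character of `((ℤ/b)^ι)^s` with frequency `k`, the multivariate `walshChar`. -/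
def walshCharV (k x : Fin s → ι → ZMod b) : ℂ := ∏ j, walshChar (k j) (x j)

theorem walshCharV_zero_left (x : Fin s → ι → ZMod b) : walshCharV 0 x = 1 :=
  prod_eq_one fun j _ => walshChar_zero_left (x j)

theorem sum_walshCharV_mul_conj [DecidableEq ι] (x x' : Fin s → ι → ZMod b) :
    ∑ k, walshCharV k x * starRingEnd ℂ (walshCharV k x') =
      if x = x' then (((b : ℝ) ^ (Fintype.card ι * s) : ℝ) : ℂ) else 0 := by
  simp_rw [walshCharV, map_prod, ← prod_mul_distrib]
  rw [← Fintype.prod_sum fun j k => walshChar k (x j) * starRingEnd ℂ (walshChar k (x' j)),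
    prod_congr rfl fun j _ => sum_walshChar_mul_conj (x j) (x' j), Finset.prod_ite_zero, prod_const]
  simp [funext_iff, pow_mul]

end Characters

section Dual

variable {b s m n : ℕ} [NeZero b]

/-- The digit vectors of the dual net of the net generated by `A`. -/
def dualVectors (A : Fin s → Matrix (Fin n) (Fin m) (ZMod b)) : Finset (Fin s → Fin n → ZMod b) :=
  univ.filter fun k => ∑ j, (A j)ᵀ *ᵥ k j = 0

variable {A : Fin s → Matrix (Fin n) (Fin m) (ZMod b)}

theorem mem_dualVectors {k : Fin s → Fin n → ZMod b} :
    k ∈ dualVectors A ↔ ∑ j, (A j)ᵀ *ᵥ k j = 0 := by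
  simp [dualVectors]

theorem zero_mem_dualVectors : (0 : Fin s → Fin n → ZMod b) ∈ dualVectors A := by
  simp [mem_dualVectors]

theorem sub_mem_dualVectors {k l : Fin s → Fin n → ZMod b} (hk : k ∈ dualVectors A)
    (hl : l ∈ dualVectors A) : k - l ∈ dualVectors A := by
  rw [mem_dualVectors] at *
  simp [mulVec_sub, hk, hl]

theorem walshCharV_mulVec (k : Fin s → Fin n → ZMod b) (v : Fin m → ZMod b) :
    walshCharV k (fun j => A j *ᵥ v) = walshChar v (∑ j, (A j)ᵀ *ᵥ k j) := by
  rw [walshChar_comm]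
  simp_rw [walshCharV, walshChar, dotProduct_mulVec, sum_dotProduct, mulVec_transpose]
  exact (map_prod (ZMod.stdAddChar (N := b)).toMonoidHom
    (fun j => Multiplicative.ofAdd (k j ᵥ* A j ⬝ᵥ v)) univ).symm

theorem sum_walshCharV_mulVec (k : Fin s → Fin n → ZMod b) :
    ∑ v, walshCharV k (fun j => A j *ᵥ v) = if k ∈ dualVectors A then (b : ℂ) ^ m else 0 := by
  simp_rw [walshCharV_mulVec, sum_walshChar, mem_dualVectors, Fintype.card_fin]

theorem poisson_summation (A : Fin s → Matrix (Fin n) (Fin m) (ZMod b))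
    (g : (Fin s → Fin n → ZMod b) → ℂ) :
    (∑ v, g fun j => A j *ᵥ v) / (b : ℂ) ^ m =
      (∑ k ∈ dualVectors A, ∑ x, g x * starRingEnd ℂ (walshCharV k x)) / (b : ℂ) ^ (n * s) := by
  have hb : (b : ℂ) ≠ 0 := NeZero.ne _
  have inversion (x : Fin s → Fin n → ZMod b) : (b : ℂ) ^ (n * s) * g x =
      ∑ k, (∑ x', g x' * starRingEnd ℂ (walshCharV k x')) * walshCharV k x := by
    rw [sum_fourier_mul_of_orthogonal sum_walshCharV_mul_conj g x]
    simp
  rw [div_eq_div_iff (pow_ne_zero _ hb) (pow_ne_zero _ hb), mul_comm, mul_sum]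
  simp only [inversion]
  rw [sum_comm]
  simp only [← mul_sum, sum_walshCharV_mulVec, mul_ite, mul_zero, sum_ite_mem, univ_inter]
  rw [sum_mul]

theorem average_net_sub_average_grid (A : Fin s → Matrix (Fin n) (Fin m) (ZMod b))
    (g : (Fin s → Fin n → ZMod b) → ℂ) :
    (∑ v, g fun j => A j *ᵥ v) / (b : ℂ) ^ m - (∑ x, g x) / (b : ℂ) ^ (n * s) =
      (∑ k ∈ (dualVectors A).erase 0, ∑ x, g x * starRingEnd ℂ (walshCharV k x)) /
        (b : ℂ) ^ (n * s) := by
  rw [poisson_summation, ← add_sum_erase _ _ (zero_mem_dualVectors (A := A))]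
  simp only [walshCharV_zero_left, map_one, mul_one]
  ring

end Dual

section Digits

variable {b m n : ℕ} [NeZero b]

/-- The number below `b ^ m` whose digit at `b ^ i` is `k i`. -/
def littleEndian : (Fin m → ZMod b) ≃ Fin (b ^ m) :=
  (Equiv.piCongrRight fun _ => (ZMod.finEquiv b).symm.toEquiv).trans finFunctionFinEquiv

theorem val_finEquiv_symm (a : ZMod b) : (((ZMod.finEquiv b).symm a : Fin b) : ℕ) = a.val := by
  obtain ⟨b, rfl⟩ := Nat.exists_eq_succ_of_ne_zero (NeZero.ne b)
  rfl

theorem coe_littleEndian (k : Fin m → ZMod b) :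
    (littleEndian k : ℕ) = ∑ i, (k i).val * b ^ (i : ℕ) := by
  simp [littleEndian, val_finEquiv_symm]

theorem ndigit_littleEndian (k : Fin m → ZMod b) (i : Fin m) :
    ndigit b (littleEndian k) i = (k i).val := by
  rw [ndigit, ← finFunctionFinEquiv_symm_apply_val, littleEndian, Equiv.trans_apply,
    Equiv.symm_apply_apply]
  exact val_finEquiv_symm (k i)

theorem ndigit_littleEndian_of_le (k : Fin m → ZMod b) {i : ℕ} (hi : m ≤ i) :
    ndigit b (littleEndian k) i = 0 := by
  have hk := (littleEndian k).isLt.trans_le (Nat.pow_le_pow_right (NeZero.pos b) hi)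
  rw [ndigit, Nat.div_eq_of_lt hk, Nat.zero_mod]

theorem exists_eq_of_ndigit_littleEndian_ne_zero {k : Fin m → ZMod b} {i : ℕ}
    (hi : ndigit b (littleEndian k) i ≠ 0) : ∃ j : Fin m, (j : ℕ) = i ∧ k j ≠ 0 := by
  have him : i < m := not_le.mp fun h => hi (ndigit_littleEndian_of_le k h)
  refine ⟨⟨i, him⟩, rfl, fun h => hi ?_⟩
  simpa [h] using ndigit_littleEndian k ⟨i, him⟩

theorem digitVec_littleEndian (k : Fin m → ZMod b) : digitVec b m (littleEndian k) = k := by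
  funext i
  rw [digitVec, ndigit_littleEndian, ZMod.natCast_zmod_val]

theorem sum_range_digitVec {M : Type*} [AddCommMonoid M] (g : (Fin m → ZMod b) → M) :
    ∑ h ∈ range (b ^ m), g (digitVec b m h) = ∑ v, g v := by
  rw [← Fin.sum_univ_eq_sum_range (fun h => g (digitVec b m h)), ← littleEndian.sum_comp]
  simp only [digitVec_littleEndian]

/-- The number below `b ^ m` with leading digit `x 0`: with `x` the first `m` digits of a real
number in `[0, 1)`, the index of the interval of length `b ^ (-m)` containing it. -/
def bigEndian : (Fin m → ZMod b) ≃ Fin (b ^ m) :=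
  (Fin.revPerm.arrowCongr (Equiv.refl _)).trans littleEndian

theorem coe_bigEndian (x : Fin m → ZMod b) :
    (bigEndian x : ℕ) = ∑ i, (x i).val * b ^ (m - (i + 1)) := by
  rw [bigEndian, Equiv.trans_apply, coe_littleEndian, ← Equiv.sum_comp Fin.revPerm]
  simp [Equiv.arrowCongr]

theorem coe_bigEndian_cons (a : ZMod b) (x : Fin m → ZMod b) :
    (bigEndian (Fin.cons a x : Fin (m + 1) → ZMod b) : ℕ) = a.val * b ^ m + bigEndian x := by
  rw [coe_bigEndian, coe_bigEndian, Fin.sum_univ_succ]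
  simp

theorem bigEndian_cons_le_iff {a c : ZMod b} {x q : Fin m → ZMod b} :
    bigEndian (Fin.cons a x : Fin (m + 1) → ZMod b) ≤ bigEndian (Fin.cons c q) ↔
      a.val < c.val ∨ a = c ∧ bigEndian x ≤ bigEndian q := by
  rw [← Fin.val_fin_le, coe_bigEndian_cons, coe_bigEndian_cons, ← Fin.val_fin_le]
  have hx := (bigEndian x).isLt
  have hq := (bigEndian q).isLt
  rcases lt_trichotomy a.val c.val with h | h | h
  · have := Nat.mul_le_mul_right (b ^ m) h
    have : a ≠ c := fun e => h.ne (congrArg _ e)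
    grind
  · obtain rfl := ZMod.val_injective b h
    simp
  · have := Nat.mul_le_mul_right (b ^ m) h
    have : a ≠ c := fun e => h.ne' (congrArg _ e)
    grind

theorem card_bigEndian_le (q : Fin m → ZMod b) :
    #{x | bigEndian x ≤ bigEndian q} = bigEndian q + 1 := by
  rw [← Fin.card_Iic, ← card_map bigEndian.toEmbedding]
  congr 1
  ext i
  simp only [mem_map_equiv, mem_filter_univ, Equiv.apply_symm_apply, mem_Iic]

end Digits

section NrtWeight

variable {b s m : ℕ}

/-- The Niederreiter–Rosenbloom–Tsfasman weight: one more than the last index at which `k` is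
nonzero, and `0` for `k = 0`. -/
def nrtWeight (k : Fin m → ZMod b) : ℕ := univ.sup fun i => if k i = 0 then 0 else (i : ℕ) + 1

theorem nrtWeight_le_iff {k : Fin m → ZMod b} {M : ℕ} :
    nrtWeight k ≤ M ↔ ∀ i, k i ≠ 0 → (i : ℕ) + 1 ≤ M := by
  simp only [nrtWeight, Finset.sup_le_iff, mem_univ, true_imp_iff]
  refine forall_congr' fun i => ?_
  by_cases hi : k i = 0 <;> simp [hi]

theorem nrtWeight_le (k : Fin m → ZMod b) : nrtWeight k ≤ m :=
  nrtWeight_le_iff.mpr fun i _ => i.isLt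

theorem lt_nrtWeight {k : Fin m → ZMod b} {i : Fin m} (hi : k i ≠ 0) : (i : ℕ) < nrtWeight k :=
  nrtWeight_le_iff.mp le_rfl i hi

theorem nrtWeight_le_nrtWeight_tail_add_one (k : Fin (m + 1) → ZMod b) :
    nrtWeight k ≤ nrtWeight (Fin.tail k) + 1 := by
  rw [nrtWeight_le_iff, Fin.forall_fin_succ]
  exact ⟨fun _ => by simp, fun i hi => by simpa using lt_nrtWeight (k := Fin.tail k) hi⟩

theorem nrtWeight_le_one_of_tail_eq_zero {k : Fin (m + 1) → ZMod b} (hk : Fin.tail k = 0) :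
    nrtWeight k ≤ 1 := by
  refine (nrtWeight_le_nrtWeight_tail_add_one k).trans ?_
  rw [hk, Nat.add_le_add_iff_right, nrtWeight_le_iff]
  simp

/-- `k` and `l` agree below their top nonzero index: if they differ at `i`, both vanish
beyond `i`. These are the pairs at which the Walsh coefficient of the order relation of `[0, 1)`
does not vanish. -/
def AgreeBelowTop (k l : Fin m → ZMod b) : Prop := ∀ i i', i < i' → k i ≠ l i → k i' = 0 ∧ l i' = 0

instance (k l : Fin m → ZMod b) : Decidable (AgreeBelowTop k l) :=
  inferInstanceAs (Decidable (∀ i i', i < i' → k i ≠ l i → k i' = 0 ∧ l i' = 0))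

theorem AgreeBelowTop.symm {k l : Fin m → ZMod b} (h : AgreeBelowTop k l) : AgreeBelowTop l k :=
  fun i i' hi hne => (h i i' hi hne.symm).symm

theorem AgreeBelowTop.eq_of_lt {k l : Fin m → ZMod b} (h : AgreeBelowTop k l) {i : Fin m}
    (hi : (i : ℕ) + 1 < max (nrtWeight k) (nrtWeight l)) : k i = l i := by
  by_contra hne
  refine hi.not_ge (max_le ?_ ?_) <;> refine nrtWeight_le_iff.mpr fun i' hi' => ?_ <;>
    by_contra! hlt
  · exact hi' (h i i' (Nat.lt_of_succ_lt_succ hlt) hne).1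
  · exact hi' (h i i' (Nat.lt_of_succ_lt_succ hlt) hne).2

theorem AgreeBelowTop.sum_ne_le {k l : Fin m → ZMod b} (h : AgreeBelowTop k l) :
    ∑ i with k i ≠ l i, ((i : ℕ) + 1) ≤ max (nrtWeight k) (nrtWeight l) := by
  have eq_max (i : Fin m) (hi : k i ≠ l i) : (i : ℕ) + 1 = max (nrtWeight k) (nrtWeight l) := by
    refine le_antisymm ?_ (not_lt.mp fun hlt => hi (h.eq_of_lt hlt))
    by_cases hk : k i = 0
    · exact le_max_of_le_right (lt_nrtWeight fun hl => hi (hk.trans hl.symm))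
    · exact le_max_of_le_left (lt_nrtWeight hk)
  have card_le_one : #{i | k i ≠ l i} ≤ 1 := card_le_one.mpr fun i hi i' hi' => Fin.ext <|
    Nat.succ_injective <|
    (eq_max i (mem_filter.mp hi).2).trans (eq_max i' (mem_filter.mp hi').2).symm
  refine (sum_le_card_nsmul _ _ _ fun i hi => (eq_max i (mem_filter.mp hi).2).le).trans ?_
  simpa using Nat.mul_le_mul_right (max (nrtWeight k) (nrtWeight l)) card_le_one

theorem AgreeBelowTop.of_tail {k l : Fin (m + 1) → ZMod b} (h₀ : k 0 = l 0)
    (h : AgreeBelowTop (Fin.tail k) (Fin.tail l)) : AgreeBelowTop k l := by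
  intro i i' hi hne
  obtain ⟨i, rfl⟩ := Fin.exists_succ_eq.mpr fun e : i = 0 => hne (e ▸ h₀)
  obtain ⟨i', rfl⟩ := Fin.exists_succ_eq.mpr (Fin.ne_zero_of_lt hi)
  exact h i i' (Fin.succ_lt_succ_iff.mp hi) hne

theorem AgreeBelowTop.of_tail_eq_zero {k l : Fin (m + 1) → ZMod b} (hk : Fin.tail k = 0)
    (hl : Fin.tail l = 0) : AgreeBelowTop k l := by
  intro i i' hi _
  obtain ⟨i', rfl⟩ := Fin.exists_succ_eq.mpr (Fin.ne_zero_of_lt hi)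
  exact ⟨congrFun hk i', congrFun hl i'⟩

end NrtWeight

section OrderCoefficient

variable {b m : ℕ} [NeZero b]

theorem walshChar_cons (k : Fin (m + 1) → ZMod b) (a : ZMod b) (x : Fin m → ZMod b) :
    walshChar k (Fin.cons a x) = ZMod.stdAddChar (k 0 * a) * walshChar (Fin.tail k) x := by
  rw [walshChar_eq_prod, Fin.prod_univ_succ, walshChar_eq_prod]
  rfl

theorem sum_fin_succ_arrow {α M : Type*} [Fintype α] [AddCommMonoid M]
    (f : (Fin (m + 1) → α) → M) : ∑ x, f x = ∑ a, ∑ x : Fin m → α, f (Fin.cons a x) := by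
  rw [← Fintype.sum_prod_type', ← (Fin.consEquiv fun _ => α).sum_comp]
  rfl

/-- The Walsh coefficient at `(k, l)` of the indicator of `x ≤ q`, on digit vectors. -/
def orderCoeff (k l : Fin m → ZMod b) : ℂ :=
  ∑ x, ∑ q, if bigEndian x ≤ bigEndian q then starRingEnd ℂ (walshChar k x) * walshChar l q else 0

theorem norm_orderCoeff_le (k l : Fin m → ZMod b) : ‖orderCoeff k l‖ ≤ (b : ℝ) ^ (2 * m) := by
  have norm_term (x q : Fin m → ZMod b) : ‖if bigEndian x ≤ bigEndian q then
      starRingEnd ℂ (walshChar k x) * walshChar l q else 0‖ ≤ 1 := by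
    split_ifs <;> simp [norm_walshChar]
  calc ‖orderCoeff k l‖ ≤ ∑ _x : Fin m → ZMod b, ∑ _q : Fin m → ZMod b, (1 : ℝ) :=
        (norm_sum_le _ _).trans <| sum_le_sum fun x _ =>
          (norm_sum_le _ _).trans <| sum_le_sum fun q _ => norm_term x q
    _ = (b : ℝ) ^ (2 * m) := by simp [pow_mul', sq]

theorem orderCoeff_succ_eq (k l : Fin (m + 1) → ZMod b) :
    orderCoeff k l =
      (∑ a : ZMod b, ZMod.stdAddChar ((l 0 - k 0) * a)) * orderCoeff (Fin.tail k) (Fin.tail l) +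
      (∑ a : ZMod b, ∑ c : ZMod b, if a.val < c.val then
          starRingEnd ℂ (ZMod.stdAddChar (k 0 * a)) * ZMod.stdAddChar (l 0 * c) else 0) *
        ((∑ x, starRingEnd ℂ (walshChar (Fin.tail k) x)) * ∑ q, walshChar (Fin.tail l) q) := by
  have split_le (a c : ZMod b) (x q : Fin m → ZMod b) (z w z' w' : ℂ) :
      (if a.val < c.val ∨ a = c ∧ bigEndian x ≤ bigEndian q then z * z' * (w * w') else 0) =
        (if a = c then z * w else 0) * (if bigEndian x ≤ bigEndian q then z' * w' else 0) +
          (if a.val < c.val then z * w else 0) * (z' * w') := by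
    rcases eq_or_ne a c with rfl | hac
    · simp [mul_mul_mul_comm]
    · simp [hac, mul_mul_mul_comm]
  have sum_mul_eq (F : ZMod b → ZMod b → ℂ) (G : (Fin m → ZMod b) → (Fin m → ZMod b) → ℂ) :
      ∑ a, ∑ x, ∑ c, ∑ q, F a c * G x q = (∑ a, ∑ c, F a c) * ∑ x, ∑ q, G x q := by
    rw [sum_mul_sum]
    exact sum_congr rfl fun a _ => sum_congr rfl fun x _ => (sum_mul_sum ..).symm
  have stdAddChar_sub_mul (a : ZMod b) : (ZMod.stdAddChar ((l 0 - k 0) * a) : ℂ) =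
      starRingEnd ℂ (ZMod.stdAddChar (k 0 * a)) * ZMod.stdAddChar (l 0 * a) := by
    rw [← AddChar.map_neg_eq_conj, ← AddChar.map_add_eq_mul]
    ring_nf
  simp_rw [orderCoeff, sum_fin_succ_arrow, bigEndian_cons_le_iff, walshChar_cons, map_mul, split_le,
    sum_add_distrib, sum_mul_eq, sum_ite_eq, mem_univ, if_true, stdAddChar_sub_mul, sum_mul_sum]

theorem orderCoeff_succ {k l : Fin (m + 1) → ZMod b} (h : ¬(Fin.tail k = 0 ∧ Fin.tail l = 0)) :
    orderCoeff k l = (if k 0 = l 0 then (b : ℂ) else 0) * orderCoeff (Fin.tail k) (Fin.tail l) := by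
  have sum_eq_zero (k : Fin m → ZMod b) (hk : k ≠ 0) : ∑ x, walshChar k x = 0 := by
    simp_rw [walshChar_comm k, sum_walshChar, if_neg hk]
  have second_term : (∑ x, starRingEnd ℂ (walshChar (Fin.tail k) x)) *
      ∑ q, walshChar (Fin.tail l) q = 0 := by
    rw [← map_sum]
    rcases not_and_or.mp h with h | h <;> simp [sum_eq_zero _ h]
  have first_term : ∑ a : ZMod b, (ZMod.stdAddChar ((l 0 - k 0) * a) : ℂ) =
      if k 0 = l 0 then (b : ℂ) else 0 := by
    simp_rw [mul_comm (l 0 - k 0)]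
    rw [AddChar.sum_mulShift _ (ZMod.isPrimitive_stdAddChar b)]
    simp [sub_eq_zero, eq_comm (a := k 0)]
  rw [orderCoeff_succ_eq, second_term, first_term, mul_zero, add_zero]

theorem orderCoeff_eq_zero {k l : Fin m → ZMod b} (h : ¬AgreeBelowTop k l) :
    orderCoeff k l = 0 := by
  induction m with
  | zero => exact absurd (fun i => i.elim0) h
  | succ m ih =>
    rw [orderCoeff_succ fun ⟨hk, hl⟩ => h (.of_tail_eq_zero hk hl)]
    by_cases h₀ : k 0 = l 0
    · rw [ih fun h' => h (.of_tail h₀ h'), mul_zero]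
    · rw [if_neg h₀, zero_mul]

theorem norm_orderCoeff_mul_pow_le (k l : Fin m → ZMod b) :
    ‖orderCoeff k l‖ * (b : ℝ) ^ max (nrtWeight k) (nrtWeight l) ≤ b * (b : ℝ) ^ (2 * m) := by
  have hb : (1 : ℝ) ≤ b := mod_cast NeZero.one_le
  induction m with
  | zero =>
    have hmax : max (nrtWeight k) (nrtWeight l) = 0 :=
      Nat.le_zero.mp (max_le (nrtWeight_le k) (nrtWeight_le l))
    simpa [hmax] using (norm_orderCoeff_le k l).trans (by simpa using hb)
  | succ m ih =>
    by_cases h : Fin.tail k = 0 ∧ Fin.tail l = 0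
    · have hmax : max (nrtWeight k) (nrtWeight l) ≤ 1 := max_le
        (nrtWeight_le_one_of_tail_eq_zero h.1) (nrtWeight_le_one_of_tail_eq_zero h.2)
      rw [mul_comm (b : ℝ)]
      exact mul_le_mul (norm_orderCoeff_le k l) (by simpa using pow_le_pow_right₀ hb hmax)
        (by positivity) (by positivity)
    · have hmax : max (nrtWeight k) (nrtWeight l) ≤
          max (nrtWeight (Fin.tail k)) (nrtWeight (Fin.tail l)) + 1 := by
        rw [← Nat.add_max_add_right]
        exact max_le_max (nrtWeight_le_nrtWeight_tail_add_one k)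
          (nrtWeight_le_nrtWeight_tail_add_one l)
      have norm_le : ‖orderCoeff k l‖ ≤ b * ‖orderCoeff (Fin.tail k) (Fin.tail l)‖ := by
        rw [orderCoeff_succ h, norm_mul]
        gcongr
        split_ifs <;> simp
      calc ‖orderCoeff k l‖ * (b : ℝ) ^ max (nrtWeight k) (nrtWeight l)
          ≤ (b * ‖orderCoeff (Fin.tail k) (Fin.tail l)‖) *
              (b : ℝ) ^ (max (nrtWeight (Fin.tail k)) (nrtWeight (Fin.tail l)) + 1) := by gcongr
        _ = b ^ 2 * (‖orderCoeff (Fin.tail k) (Fin.tail l)‖ *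
              (b : ℝ) ^ max (nrtWeight (Fin.tail k)) (nrtWeight (Fin.tail l))) := by ring
        _ ≤ b ^ 2 * (b * (b : ℝ) ^ (2 * m)) :=
            mul_le_mul_of_nonneg_left (ih _ _) (by positivity)
        _ = b * (b : ℝ) ^ (2 * (m + 1)) := by ring

end OrderCoefficient

section RelatedPairs

variable {b m : ℕ} [NeZero b]

theorem card_agreeBelowTop_max_eq_le (k : Fin m → ZMod b) (N : ℕ) :
    #{l | AgreeBelowTop k l ∧ max (nrtWeight k) (nrtWeight l) = N} ≤ b := by
  let topDigit (l : Fin m → ZMod b) : ZMod b := if h : N - 1 < m then l ⟨N - 1, h⟩ else 0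
  refine (card_le_card_of_injOn (t := univ) topDigit (by simp) ?_).trans (by simp [ZMod.card])
  intro l hl l' hl' htop
  simp only [coe_filter_univ, Set.mem_ofPred_eq] at hl hl'
  funext i
  rcases lt_trichotomy ((i : ℕ) + 1) N with hi | hi | hi
  · rw [← hl.1.eq_of_lt (hl.2 ▸ hi), ← hl'.1.eq_of_lt (hl'.2 ▸ hi)]
  · have hN : N - 1 = i := by omega
    simpa [topDigit, hN] using htop
  · have vanishes (l : Fin m → ZMod b) (hl : nrtWeight l ≤ N) : l i = 0 := by
      by_contra h
      exact hi.not_ge ((lt_nrtWeight h).trans_le hl)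
    rw [vanishes l (hl.2 ▸ le_max_right _ _), vanishes l' (hl'.2 ▸ le_max_right _ _)]

theorem card_agreeBelowTop_le (k : Fin m → ZMod b) : #{l | AgreeBelowTop k l} ≤ b * (m + 1) := by
  rw [← card_range (m + 1)]
  refine card_le_mul_card_image_of_maps_to (f := fun l => max (nrtWeight k) (nrtWeight l))
    (fun l _ => by simp [nrtWeight_le]) b fun N _ => ?_
  rw [filter_filter]
  exact card_agreeBelowTop_max_eq_le k N

theorem sum_Ico_pow_le {r : ℝ} (h₀ : 0 ≤ r) (h₁ : r ≤ 1 / 2) (i j : ℕ) :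
    ∑ N ∈ Ico i j, r ^ N ≤ 2 * r ^ i := by
  refine (geom_sum_Ico_le_of_lt_one h₀ (h₁.trans_lt one_half_lt_one)).trans ?_
  rw [div_le_iff₀ (by linarith)]
  nlinarith [pow_nonneg h₀ i]

theorem sum_agreeBelowTop_pow_max_le {r : ℝ} (h₀ : 0 ≤ r) (h₁ : r ≤ 1 / 2) (k : Fin m → ZMod b) :
    ∑ l with AgreeBelowTop k l, r ^ max (nrtWeight k) (nrtWeight l) ≤
      2 * b * r ^ nrtWeight k := by
  calc ∑ l with AgreeBelowTop k l, r ^ max (nrtWeight k) (nrtWeight l)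
      = ∑ N ∈ Ico (nrtWeight k) (m + 1),
          #{l | AgreeBelowTop k l ∧ max (nrtWeight k) (nrtWeight l) = N} * r ^ N := by
        rw [← sum_fiberwise_of_maps_to' (t := Ico (nrtWeight k) (m + 1))
          (g := fun l => max (nrtWeight k) (nrtWeight l))
          (fun l _ => by simp [nrtWeight_le]) fun N => r ^ N]
        simp only [sum_const, filter_filter, nsmul_eq_mul]
    _ ≤ ∑ N ∈ Ico (nrtWeight k) (m + 1), b * r ^ N := by
        gcongr with N
        exact card_agreeBelowTop_max_eq_le k N
    _ ≤ 2 * b * r ^ nrtWeight k := by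
        rw [← mul_sum, mul_comm 2, mul_assoc]
        exact mul_le_mul_of_nonneg_left (sum_Ico_pow_le h₀ h₁ _ _) (Nat.cast_nonneg b)

end RelatedPairs

section WalshDecay

variable {b s m : ℕ}

/-- The multivariate NRT weight. -/
def nrtWeightV (k : Fin s → Fin m → ZMod b) : ℕ := ∑ j, nrtWeight (k j)

/-- The weight `∑ j, max (μ (k j)) (μ (l j))` governing the Walsh coefficient at `(k, l)`. -/
def jointWeight (k l : Fin s → Fin m → ZMod b) : ℕ := ∑ j, max (nrtWeight (k j)) (nrtWeight (l j))

/-- The decay of the Walsh coefficient at `(k, l)` of the indicator of a box anchored at `0`. -/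
def decay (k l : Fin s → Fin m → ZMod b) : ℝ :=
  if ∀ j, AgreeBelowTop (k j) (l j) then (b : ℝ)⁻¹ ^ jointWeight k l else 0

theorem decay_nonneg (k l : Fin s → Fin m → ZMod b) : 0 ≤ decay k l := by
  unfold decay
  positivity

theorem decay_pow_eq_prod {p : ℕ} (hp : p ≠ 0) (k l : Fin s → Fin m → ZMod b) :
    decay k l ^ p = ∏ j, if AgreeBelowTop (k j) (l j) then
      ((b : ℝ)⁻¹ ^ p) ^ max (nrtWeight (k j)) (nrtWeight (l j)) else 0 := by
  rw [decay, Finset.prod_ite_zero, prod_pow_eq_pow_sum, ← jointWeight]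
  simp only [mem_univ, true_imp_iff]
  split_ifs
  · rw [← pow_mul, ← pow_mul, mul_comm]
  · rw [zero_pow hp]

theorem inv_natCast_le_half (hb : 1 < b) : (b : ℝ)⁻¹ ≤ 1 / 2 := by
  rw [inv_eq_one_div]
  exact one_div_le_one_div_of_le two_pos (mod_cast hb)

variable [NeZero b]

theorem norm_prod_orderCoeff_le (k l : Fin s → Fin m → ZMod b) :
    ‖∏ j, orderCoeff (k j) (l j)‖ ≤ (b : ℝ) ^ s * (b : ℝ) ^ (2 * (m * s)) * decay k l := by
  have hb : (0 : ℝ) < b := mod_cast NeZero.pos b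
  have one_coordinate (j : Fin s) : ‖orderCoeff (k j) (l j)‖ ≤ b * (b : ℝ) ^ (2 * m) *
      if AgreeBelowTop (k j) (l j) then
        ((b : ℝ)⁻¹ ^ 1) ^ max (nrtWeight (k j)) (nrtWeight (l j)) else 0 := by
    split_ifs with h
    · rw [pow_one, inv_pow, ← div_eq_mul_inv, le_div_iff₀ (by positivity)]
      exact norm_orderCoeff_mul_pow_le _ _
    · rw [orderCoeff_eq_zero h, norm_zero, mul_zero]
  rw [norm_prod, ← pow_one (decay k l), decay_pow_eq_prod one_ne_zero]
  refine (prod_le_prod (fun _ _ => norm_nonneg _) fun j _ => one_coordinate j).trans_eq ?_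
  rw [prod_mul_distrib, prod_const, card_fin, mul_pow, ← pow_mul, mul_assoc 2]

theorem sum_decay_pow_le (hb : 1 < b) {p : ℕ} (hp : p ≠ 0) (k : Fin s → Fin m → ZMod b) :
    ∑ l, decay k l ^ p ≤ (2 * b : ℝ) ^ s * ((b : ℝ)⁻¹ ^ p) ^ nrtWeightV k := by
  have hr₀ : 0 ≤ (b : ℝ)⁻¹ ^ p := by positivity
  have hr₁ : (b : ℝ)⁻¹ ^ p ≤ 1 / 2 :=
    (pow_le_of_le_one (by positivity) ((inv_natCast_le_half hb).trans one_half_lt_one.le) hp).trans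
      (inv_natCast_le_half hb)
  calc ∑ l, decay k l ^ p
      = ∏ j, ∑ l with AgreeBelowTop (k j) l,
          ((b : ℝ)⁻¹ ^ p) ^ max (nrtWeight (k j)) (nrtWeight l) := by
        simp_rw [decay_pow_eq_prod hp, sum_filter]
        exact (Fintype.prod_sum fun j l => if AgreeBelowTop (k j) l then
          ((b : ℝ)⁻¹ ^ p) ^ max (nrtWeight (k j)) (nrtWeight l) else 0).symm
    _ ≤ ∏ j, 2 * b * ((b : ℝ)⁻¹ ^ p) ^ nrtWeight (k j) :=
        prod_le_prod (fun j _ => sum_nonneg fun l _ => pow_nonneg hr₀ _)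
          fun j _ => sum_agreeBelowTop_pow_max_le hr₀ hr₁ (k j)
    _ = (2 * b : ℝ) ^ s * ((b : ℝ)⁻¹ ^ p) ^ nrtWeightV k := by
        rw [prod_mul_distrib, prod_const, card_fin, prod_pow_eq_pow_sum, nrtWeightV]

theorem card_forall_agreeBelowTop_le (l : Fin s → Fin m → ZMod b) :
    #{k : Fin s → Fin m → ZMod b | ∀ j, AgreeBelowTop (k j) (l j)} ≤ (b * (m + 1)) ^ s := by
  calc #{k : Fin s → Fin m → ZMod b | ∀ j, AgreeBelowTop (k j) (l j)}
      = #(Fintype.piFinset fun j => {k | AgreeBelowTop (l j) k}) := by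
        congr 1 with k
        simp only [mem_filter_univ, Fintype.mem_piFinset]
        exact forall_congr' fun j => ⟨.symm, .symm⟩
    _ ≤ (b * (m + 1)) ^ s := by
        rw [Fintype.card_piFinset]
        exact (prod_le_prod' fun j _ => card_agreeBelowTop_le (l j)).trans_eq (by simp)

end WalshDecay

section DualCounting

variable {b s m n t : ℕ} {A : Fin s → Matrix (Fin n) (Fin m) (ZMod b)}

theorem nrtWeightV_pos {k : Fin s → Fin n → ZMod b} (hk : k ≠ 0) : 0 < nrtWeightV k := by
  obtain ⟨j, hj⟩ := Function.ne_iff.mp hk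
  obtain ⟨i, hi⟩ := Function.ne_iff.mp hj
  exact (Nat.zero_lt_of_lt (lt_nrtWeight hi)).trans_le
    (single_le_sum (f := fun j => nrtWeight (k j)) (fun _ _ => Nat.zero_le _) (mem_univ j))

variable [NeZero b]

/-- `A` generates a digital `(t, m, s)`-net, in the dual formulation by the NRT weight. The
truncated subtraction makes this vacuous for `m ≤ t`. -/
def IsDigitalNet (A : Fin s → Matrix (Fin n) (Fin m) (ZMod b)) (t : ℕ) : Prop :=
  ∀ k ∈ dualVectors A, k ≠ 0 → m - t < nrtWeightV k

theorem IsDigitalNet.eq_of_forall_le_eq (hA : IsDigitalNet A t) {k k' : Fin s → Fin n → ZMod b}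
    (hk : k ∈ dualVectors A) (hk' : k' ∈ dualVectors A) {c : Fin s → ℕ} (hc : ∑ j, c j ≤ m - t)
    (heq : ∀ j, ∀ i : Fin n, c j ≤ i → k j i = k' j i) : k = k' := by
  by_contra hne
  refine (hA _ (sub_mem_dualVectors hk hk') (sub_ne_zero.mpr hne)).not_ge ?_
  refine (sum_le_sum fun j _ => nrtWeight_le_iff.mpr fun i hi => ?_).trans hc
  by_contra! hci
  exact hi (sub_eq_zero.mpr (heq j i (Nat.le_of_lt_succ hci)))

theorem IsDigitalNet.card_nrtWeight_le_mul_pow_le (hA : IsDigitalNet A t) (M : Fin s → ℕ)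
    (hM : m - t ≤ ∑ j, M j) :
    #{k ∈ dualVectors A | ∀ j, nrtWeight (k j) ≤ M j} * b ^ m ≤ b ^ (∑ j, M j + t) := by
  obtain ⟨c, hcM, hc⟩ := Finsupp.exists_le_degree_eq (Finsupp.equivFunOnFinite.symm M) (m - t)
    (by simpa [Finsupp.degree_eq_sum] using hM)
  rw [Finsupp.degree_eq_sum] at hc
  let upperDigits (k : Fin s → Fin n → ZMod b) (j : Fin s) (i : Fin (M j - c j)) : ZMod b :=
    if h : c j + i < n then k j ⟨c j + i, h⟩ else 0
  have card_le : #{k ∈ dualVectors A | ∀ j, nrtWeight (k j) ≤ M j} ≤ b ^ (∑ j, (M j - c j)) := by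
    refine (card_le_card_of_injOn (t := univ) upperDigits (by simp) ?_).trans_eq
      (by simp [Fintype.card_pi, prod_pow_eq_pow_sum])
    intro k hk k' hk' heq
    simp only [coe_filter, Set.mem_ofPred_eq] at hk hk'
    refine hA.eq_of_forall_le_eq hk.1 hk'.1 hc.le fun j i hi => ?_
    rcases lt_or_ge (i : ℕ) (M j) with hiM | hiM
    · have := congrFun (congrFun heq j) ⟨i - c j, by omega⟩
      simpa [upperDigits, Nat.add_sub_cancel' hi] using this
    · have vanishes (l : Fin n → ZMod b) (hl : nrtWeight l ≤ M j) : l i = 0 := by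
        by_contra h
        exact ((lt_nrtWeight h).trans_le hl).not_ge hiM
      rw [vanishes _ (hk.2 j), vanishes _ (hk'.2 j)]
  refine (Nat.mul_le_mul_right _ card_le).trans ?_
  rw [← pow_add]
  refine Nat.pow_le_pow_right (NeZero.pos b) ?_
  have := sum_tsub_distrib univ fun j _ => hcM j
  simp only [Finsupp.equivFunOnFinite_symm_apply_apply] at this
  omega

theorem IsDigitalNet.sum_dual_pow_nrtWeightV_le (hA : IsDigitalNet A t) {r : ℝ} (hr : 0 ≤ r) :
    ∑ k ∈ (dualVectors A).erase 0, r ^ nrtWeightV k ≤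
      ∑ M : Fin s → Fin (n + 1), if m - t ≤ ∑ j, (M j : ℕ) then
        (b : ℝ) ^ t / (b : ℝ) ^ m * (b * r) ^ ∑ j, (M j : ℕ) else 0 := by
  have hb : (0 : ℝ) < b := mod_cast NeZero.pos b
  let profile (k : Fin s → Fin n → ZMod b) (j : Fin s) : Fin (n + 1) :=
    ⟨nrtWeight (k j), Nat.lt_succ_of_le (nrtWeight_le _)⟩
  rw [← sum_fiberwise_of_maps_to (t := univ) (g := profile) fun k _ => mem_univ _]
  refine sum_le_sum fun M _ => ?_
  have weight_eq (k) (hk : profile k = M) : nrtWeightV k = ∑ j, (M j : ℕ) := by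
    rw [nrtWeightV, ← hk]
  split_ifs with hM
  · have card_mul_le : #{k ∈ (dualVectors A).erase 0 | profile k = M} * b ^ m ≤
        b ^ (∑ j, (M j : ℕ) + t) := by
      refine le_trans (Nat.mul_le_mul_right _ (card_le_card fun k hk => ?_))
        (hA.card_nrtWeight_le_mul_pow_le (fun j => (M j : ℕ)) hM)
      obtain ⟨hdual, rfl⟩ := mem_filter.mp hk
      exact mem_filter.mpr ⟨mem_of_mem_erase hdual, fun j => le_rfl⟩
    calc ∑ k ∈ (dualVectors A).erase 0 with profile k = M, r ^ nrtWeightV k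
        = #{k ∈ (dualVectors A).erase 0 | profile k = M} * r ^ ∑ j, (M j : ℕ) := by
          rw [← nsmul_eq_mul]
          exact sum_eq_card_nsmul fun k hk => by rw [weight_eq k (mem_filter.mp hk).2]
      _ ≤ (b : ℝ) ^ (∑ j, (M j : ℕ) + t) / (b : ℝ) ^ m * r ^ ∑ j, (M j : ℕ) := by
          gcongr
          rw [le_div_iff₀ (by positivity)]
          exact_mod_cast card_mul_le
      _ = (b : ℝ) ^ t / (b : ℝ) ^ m * (b * r) ^ ∑ j, (M j : ℕ) := by ring
  · rw [filter_false_of_mem, sum_empty]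
    intro k hk hkM
    rw [mem_erase] at hk
    exact hM (weight_eq k hkM ▸ (hA k hk.2 hk.1).le)

theorem inv_pow_sub_le : (b : ℝ)⁻¹ ^ (m - t) ≤ (b : ℝ) ^ t / (b : ℝ) ^ m := by
  have hb : (1 : ℝ) ≤ b := mod_cast NeZero.one_le
  rw [inv_pow, inv_eq_one_div, div_le_div_iff₀ (by positivity) (by positivity), one_mul, ← pow_add]
  exact pow_le_pow_right₀ hb (by omega)

theorem IsDigitalNet.sum_dual_inv_pow_le (hA : IsDigitalNet A t) :
    ∑ k ∈ (dualVectors A).erase 0, (b : ℝ)⁻¹ ^ nrtWeightV k ≤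
      (n + 1 : ℝ) ^ s * ((b : ℝ) ^ t / (b : ℝ) ^ m) := by
  refine (hA.sum_dual_pow_nrtWeightV_le (by positivity)).trans ?_
  rw [mul_inv_cancel₀ (NeZero.ne _)]
  calc ∑ M : Fin s → Fin (n + 1), (if m - t ≤ ∑ j, (M j : ℕ) then
        (b : ℝ) ^ t / (b : ℝ) ^ m * 1 ^ ∑ j, (M j : ℕ) else 0)
      ≤ ∑ _M : Fin s → Fin (n + 1), (b : ℝ) ^ t / (b : ℝ) ^ m := by
        refine sum_le_sum fun M _ => ?_
        split_ifs
        · rw [one_pow, mul_one]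
        · positivity
    _ = (n + 1 : ℝ) ^ s * ((b : ℝ) ^ t / (b : ℝ) ^ m) := by simp

theorem sum_ite_le_add_pow_le {r : ℝ} (h₀ : 0 ≤ r) (h₁ : r ≤ 1 / 2) (N a c : ℕ) :
    ∑ i : Fin N, (if a ≤ i + c then r ^ (i + c : ℕ) else 0) ≤ 2 * r ^ a := by
  rw [← sum_filter]
  refine le_trans ?_ (sum_Ico_pow_le h₀ h₁ a (N + c))
  rw [← sum_image (f := fun N => r ^ N) (g := fun i : Fin N => (i : ℕ) + c)
    fun i _ i' _ h => Fin.ext (Nat.add_right_cancel h)]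
  refine sum_le_sum_of_subset_of_nonneg (fun N hN => ?_) fun N _ _ => pow_nonneg h₀ N
  obtain ⟨i, hi, rfl⟩ := mem_image.mp hN
  exact mem_Ico.mpr ⟨(mem_filter.mp hi).2, Nat.add_lt_add_right i.isLt c⟩

theorem sum_ite_le_sum_pow_le {r : ℝ} (h₀ : 0 ≤ r) (h₁ : r ≤ 1 / 2) (s N a : ℕ) :
    ∑ M : Fin (s + 1) → Fin N, (if a ≤ ∑ j, (M j : ℕ) then r ^ ∑ j, (M j : ℕ) else 0) ≤
      (N : ℝ) ^ s * (2 * r ^ a) := by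
  rw [sum_fin_succ_arrow, sum_comm]
  simp only [Fin.sum_univ_succ, Fin.cons_zero, Fin.cons_succ]
  refine (sum_le_sum fun M _ => sum_ite_le_add_pow_le h₀ h₁ N a (∑ j, (M j : ℕ))).trans_eq ?_
  simp

theorem IsDigitalNet.sum_dual_inv_sq_pow_le (hb : 1 < b)
    {A : Fin (s + 1) → Matrix (Fin n) (Fin m) (ZMod b)} (hA : IsDigitalNet A t) :
    ∑ k ∈ (dualVectors A).erase 0, ((b : ℝ)⁻¹ ^ 2) ^ nrtWeightV k ≤
      (n + 1 : ℝ) ^ s * (2 * ((b : ℝ) ^ t / (b : ℝ) ^ m) ^ 2) := by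
  have one_power : (b : ℝ) * (b : ℝ)⁻¹ ^ 2 = (b : ℝ)⁻¹ := by
    rw [sq, mul_inv_cancel_left₀ (NeZero.ne _)]
  refine (hA.sum_dual_pow_nrtWeightV_le (by positivity)).trans ?_
  simp_rw [one_power, ← mul_ite_zero, ← mul_sum]
  refine (mul_le_mul_of_nonneg_left (sum_ite_le_sum_pow_le (by positivity)
    (inv_natCast_le_half hb) s (n + 1) (m - t)) (by positivity)).trans ?_
  have := inv_pow_sub_le (b := b) (m := m) (t := t)
  push_cast
  calc (b : ℝ) ^ t / (b : ℝ) ^ m * ((n + 1) ^ s * (2 * (b : ℝ)⁻¹ ^ (m - t)))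
      ≤ (b : ℝ) ^ t / (b : ℝ) ^ m * ((n + 1) ^ s * (2 * ((b : ℝ) ^ t / (b : ℝ) ^ m))) := by gcongr
    _ = (n + 1 : ℝ) ^ s * (2 * ((b : ℝ) ^ t / (b : ℝ) ^ m) ^ 2) := by ring

end DualCounting

section Energy

variable {b s m n t : ℕ} [NeZero b]

/-- The discrepancy of the net generated by `A` on the box of all points whose `j`-th coordinate
does not exceed the last one with leading digits `q j`. -/
def boxDiscrepancy (A : Fin s → Matrix (Fin n) (Fin m) (ZMod b)) (q : Fin s → Fin n → ZMod b) : ℝ :=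
  #{v | ∀ j, bigEndian (A j *ᵥ v) ≤ bigEndian (q j)} / (b : ℝ) ^ m -
    ∏ j, ((bigEndian (q j) : ℕ) + 1 : ℝ) / (b : ℝ) ^ n

theorem ofReal_boxDiscrepancy (A : Fin s → Matrix (Fin n) (Fin m) (ZMod b))
    (q : Fin s → Fin n → ZMod b) :
    (boxDiscrepancy A q : ℂ) = (∑ k ∈ (dualVectors A).erase 0, ∑ x : Fin s → Fin n → ZMod b,
      (if ∀ j, bigEndian (x j) ≤ bigEndian (q j) then 1 else 0) *
        starRingEnd ℂ (walshCharV k x)) / (b : ℂ) ^ (n * s) := by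
  have card_box : #{x : Fin s → Fin n → ZMod b | ∀ j, bigEndian (x j) ≤ bigEndian (q j)} =
      ∏ j, ((bigEndian (q j) : ℕ) + 1) := by
    rw [← prod_congr rfl fun j _ => card_bigEndian_le (q j), ← Fintype.card_piFinset]
    congr 1 with x
    simp
  rw [← average_net_sub_average_grid, boxDiscrepancy, prod_div_distrib, prod_const, card_fin,
    ← pow_mul, sum_boole, sum_boole, card_box]
  push_cast
  rfl

theorem sum_boxDiscrepancy_mul_walshCharV (A : Fin s → Matrix (Fin n) (Fin m) (ZMod b))
    (l : Fin s → Fin n → ZMod b) :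
    ∑ q, (boxDiscrepancy A q : ℂ) * walshCharV l q =
      (∑ k ∈ (dualVectors A).erase 0, ∏ j, orderCoeff (k j) (l j)) / (b : ℂ) ^ (n * s) := by
  have prod_orderCoeff (k : Fin s → Fin n → ZMod b) : ∏ j, orderCoeff (k j) (l j) =
      ∑ q : Fin s → Fin n → ZMod b, ∑ x : Fin s → Fin n → ZMod b,
        (if ∀ j, bigEndian (x j) ≤ bigEndian (q j) then 1 else 0) *
          starRingEnd ℂ (walshCharV k x) * walshCharV l q := by
    simp_rw [orderCoeff, Fintype.prod_sum]
    rw [sum_comm]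
    refine sum_congr rfl fun q _ => sum_congr rfl fun x _ => ?_
    simp only [Finset.prod_ite_zero, mem_univ, true_imp_iff, walshCharV, map_prod, prod_mul_distrib,
      ite_mul, one_mul, zero_mul]
  simp_rw [ofReal_boxDiscrepancy, div_mul_eq_mul_div, ← sum_div, prod_orderCoeff, sum_mul]
  rw [sum_comm]

theorem sum_sq_boxDiscrepancy_le_sum_decay (A : Fin s → Matrix (Fin n) (Fin m) (ZMod b)) :
    (∑ q, boxDiscrepancy A q ^ 2) / (b : ℝ) ^ (n * s) ≤
      (b : ℝ) ^ (2 * s) * ∑ l, (∑ k ∈ (dualVectors A).erase 0, decay k l) ^ 2 := by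
  have hb : (0 : ℝ) < b := mod_cast NeZero.pos b
  have norm_le (l : Fin s → Fin n → ZMod b) : ‖∑ q, (boxDiscrepancy A q : ℂ) * walshCharV l q‖ ≤
      (b : ℝ) ^ s * (b : ℝ) ^ (n * s) * ∑ k ∈ (dualVectors A).erase 0, decay k l := by
    rw [sum_boxDiscrepancy_mul_walshCharV, norm_div, norm_pow, Complex.norm_natCast,
      div_le_iff₀ (by positivity)]
    refine (norm_sum_le_of_le _ fun k _ => norm_prod_orderCoeff_le k l).trans_eq ?_
    rw [← mul_sum]
    ring
  have parseval := sum_norm_sq_of_orthogonal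
    (sum_walshCharV_mul_conj (b := b) (s := s) (ι := Fin n)) fun q => (boxDiscrepancy A q : ℂ)
  simp only [Complex.norm_real, Real.norm_eq_abs, sq_abs, Fintype.card_fin] at parseval
  rw [div_le_iff₀ (by positivity), ← mul_le_mul_iff_right₀ (pow_pos hb (n * s)), ← parseval]
  refine (sum_le_sum fun l _ => pow_le_pow_left₀ (norm_nonneg _) (norm_le l) 2).trans_eq ?_
  simp_rw [mul_pow, ← mul_sum]
  ring

theorem sq_sum_le_of_pairwise_min_le {ι : Type*} {P : Finset ι} {f : ι → ℝ} {β : ℝ}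
    (hβ : 0 ≤ β) (hf : ∀ i, 0 ≤ f i) (hmin : ∀ i ∈ P, ∀ j ∈ P, i ≠ j → min (f i) (f j) ≤ β) :
    (∑ i ∈ P, f i) ^ 2 ≤ ∑ i ∈ P, f i ^ 2 + 2 * β * (#{i ∈ P | f i ≠ 0} * ∑ i ∈ P, f i) := by
  classical
  have mul_le (i) (hi : i ∈ P) (j) (hj : j ∈ P) : f i * f j ≤ (if i = j then f i ^ 2 else 0) +
      β * (f i * (if f j ≠ 0 then 1 else 0) + (if f i ≠ 0 then 1 else 0) * f j) := by
    rcases eq_or_ne i j with rfl | hij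
    · have := hf i
      rw [if_pos rfl, ← sq]
      exact le_add_of_nonneg_right (by positivity)
    · rcases (hf i).eq_or_lt' with hi₀ | hi₀
      · simp [hi₀, hij]
      rcases (hf j).eq_or_lt' with hj₀ | hj₀
      · simp [hj₀, hij]
      rw [if_neg hij, if_pos hi₀.ne', if_pos hj₀.ne', zero_add, mul_one, one_mul,
        ← min_mul_max]
      exact mul_le_mul (hmin i hi j hj hij) (max_le_add_of_nonneg (hf i) (hf j))
        (le_max_of_le_left (hf i)) hβ
  rw [sq, sum_mul_sum]
  refine (sum_le_sum fun i hi => sum_le_sum fun j hj => mul_le i hi j hj).trans_eq ?_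
  simp_rw [sum_add_distrib, ← mul_sum, sum_add_distrib, ← sum_mul_sum, sum_ite_eq,
    sum_boole]
  rw [sum_congr rfl fun i hi => if_pos hi]
  ring

theorem sum_sq_sum_decay_le {P : Finset (Fin s → Fin n → ZMod b)} {β : ℝ} (hβ : 0 ≤ β)
    (hmin : ∀ k ∈ P, ∀ k' ∈ P, k ≠ k' → ∀ l, min (decay k l) (decay k' l) ≤ β) :
    ∑ l, (∑ k ∈ P, decay k l) ^ 2 ≤ ∑ k ∈ P, ∑ l, decay k l ^ 2 +
      2 * β * ((b * (n + 1) : ℝ) ^ s * ∑ k ∈ P, ∑ l, decay k l) := by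
  have card_support_le (l : Fin s → Fin n → ZMod b) :
      (#{k ∈ P | decay k l ≠ 0} : ℝ) ≤ (b * (n + 1) : ℝ) ^ s := by
    refine mod_cast (card_le_card fun k hk => ?_).trans (card_forall_agreeBelowTop_le l)
    exact mem_filter.mpr ⟨mem_univ _, (ite_ne_right_iff.mp (mem_filter.mp hk).2).1⟩
  calc ∑ l, (∑ k ∈ P, decay k l) ^ 2
      ≤ ∑ l, (∑ k ∈ P, decay k l ^ 2 +
          2 * β * ((b * (n + 1) : ℝ) ^ s * ∑ k ∈ P, decay k l)) := by
        refine sum_le_sum fun l _ => (sq_sum_le_of_pairwise_min_le hβ (decay_nonneg · l)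
          fun k hk k' hk' hne => hmin k hk k' hk' hne l).trans ?_
        have := sum_nonneg fun k (_ : k ∈ P) => decay_nonneg k l
        gcongr
        exact card_support_le l
    _ = _ := by
        rw [sum_add_distrib, ← mul_sum, ← mul_sum, sum_comm, sum_comm (f := fun l k => decay k l)]

theorem IsDigitalNet.sum_sq_boxDiscrepancy_le (hb : 1 < b)
    {A : Fin (s + 1) → Matrix (Fin n) (Fin m) (ZMod b)} (hA : IsDigitalNet A t) {β : ℝ} (hβ : 0 ≤ β)
    (hmin : ∀ k ∈ dualVectors A, ∀ k' ∈ dualVectors A, k ≠ k' → ∀ l,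
      min (decay k l) (decay k' l) ≤ β) :
    (∑ q, boxDiscrepancy A q ^ 2) / (b : ℝ) ^ (n * (s + 1)) ≤
      (b : ℝ) ^ (2 * (s + 1)) * (2 * b) ^ (s + 1) * (2 * (n + 1) ^ s * ((b : ℝ) ^ t / b ^ m) ^ 2 +
        2 * β * ((b * (n + 1)) ^ (s + 1) * (n + 1) ^ (s + 1) * ((b : ℝ) ^ t / b ^ m))) := by
  have sum_decay_sq : ∑ k ∈ (dualVectors A).erase 0, ∑ l, decay k l ^ 2 ≤
      (2 * b : ℝ) ^ (s + 1) * ((n + 1 : ℝ) ^ s * (2 * ((b : ℝ) ^ t / (b : ℝ) ^ m) ^ 2)) := by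
    refine (sum_le_sum fun k _ => sum_decay_pow_le hb two_ne_zero k).trans ?_
    rw [← mul_sum]
    gcongr
    exact hA.sum_dual_inv_sq_pow_le hb
  have sum_decay : ∑ k ∈ (dualVectors A).erase 0, ∑ l, decay k l ≤
      (2 * b : ℝ) ^ (s + 1) * ((n + 1 : ℝ) ^ (s + 1) * ((b : ℝ) ^ t / (b : ℝ) ^ m)) := by
    have := sum_le_sum fun k (_ : k ∈ (dualVectors A).erase 0) =>
      sum_decay_pow_le hb one_ne_zero k
    simp only [pow_one, ← mul_sum] at this
    refine this.trans ?_
    gcongr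
    exact hA.sum_dual_inv_pow_le
  calc (∑ q, boxDiscrepancy A q ^ 2) / (b : ℝ) ^ (n * (s + 1))
      ≤ (b : ℝ) ^ (2 * (s + 1)) * ∑ l, (∑ k ∈ (dualVectors A).erase 0, decay k l) ^ 2 :=
        sum_sq_boxDiscrepancy_le_sum_decay A
    _ ≤ (b : ℝ) ^ (2 * (s + 1)) * (∑ k ∈ (dualVectors A).erase 0, ∑ l, decay k l ^ 2 +
          2 * β * ((b * (n + 1) : ℝ) ^ (s + 1) *
            ∑ k ∈ (dualVectors A).erase 0, ∑ l, decay k l)) := by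
        gcongr
        exact sum_sq_sum_decay_le hβ fun k hk k' hk' =>
          hmin k (mem_of_mem_erase hk) k' (mem_of_mem_erase hk')
    _ ≤ (b : ℝ) ^ (2 * (s + 1)) *
          ((2 * b : ℝ) ^ (s + 1) * ((n + 1 : ℝ) ^ s * (2 * ((b : ℝ) ^ t / (b : ℝ) ^ m) ^ 2)) +
          2 * β * ((b * (n + 1) : ℝ) ^ (s + 1) *
            ((2 * b : ℝ) ^ (s + 1) * ((n + 1 : ℝ) ^ (s + 1) * ((b : ℝ) ^ t / (b : ℝ) ^ m))))) := by
        gcongr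
    _ = _ := by ring

end Energy

section DickWeight

variable {b s m n t α : ℕ}

theorem dickWeight_le_mul {k M : ℕ} (hM : ∀ i, ndigit b k i ≠ 0 → i + 1 ≤ M) :
    dickWeight b α k ≤ α * M := by
  refine (List.sum_le_card_nsmul _ M fun x hx => ?_).trans
    (Nat.mul_le_mul_right M (by simp))
  obtain ⟨i, hi, rfl⟩ := List.mem_map.mp hx
  have hi := List.mem_of_mem_take hi
  simp only [nzPos, List.mem_reverse, Finset.mem_sort, mem_filter] at hi
  exact hM i hi.2

theorem dickWeight_le_sum (b α k : ℕ) :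
    dickWeight b α k ≤ ∑ i ∈ range k with ndigit b k i ≠ 0, (i + 1) := by
  refine ((nzPos b k).take_sublist α |>.map (· + 1)).sum_le_sum (by simp) |>.trans_eq ?_
  rw [nzPos, List.map_reverse, List.sum_reverse, ← Finset.sum_map_toList]
  exact ((Finset.sort_perm_toList _ _).map _).sum_eq

/-- The matrix of the first `m` rows of `C`, padded by zero rows if `C` has fewer. -/
def leadingRows (C : Matrix (Fin n) (Fin m) (ZMod b)) : Matrix (Fin m) (Fin m) (ZMod b) :=
  of fun i => if h : (i : ℕ) < n then C ⟨i, h⟩ else 0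

theorem leadingRows_mulVec (C : Matrix (Fin n) (Fin m) (ZMod b)) (v : Fin m → ZMod b) (i : Fin m) :
    (leadingRows C *ᵥ v) i = if h : (i : ℕ) < n then (C *ᵥ v) ⟨i, h⟩ else 0 := by
  by_cases hi : (i : ℕ) < n <;> simp [leadingRows, mulVec, hi]

variable [NeZero b]

theorem dickWeight_littleEndian_le_mul (k : Fin m → ZMod b) :
    dickWeight b α (littleEndian k) ≤ α * nrtWeight k := by
  refine dickWeight_le_mul fun i hi => ?_
  obtain ⟨j, rfl, hj⟩ := exists_eq_of_ndigit_littleEndian_ne_zero hi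
  exact lt_nrtWeight hj

theorem dickWeight_littleEndian_le_sum (k : Fin m → ZMod b) :
    dickWeight b α (littleEndian k) ≤ ∑ i with k i ≠ 0, ((i : ℕ) + 1) := by
  refine (dickWeight_le_sum b α _).trans ((sum_le_sum_of_subset fun i hi => ?_).trans_eq
    (sum_map ({i | k i ≠ 0} : Finset (Fin m)) Fin.valEmbedding (· + 1)))
  obtain ⟨j, rfl, hj⟩ := exists_eq_of_ndigit_littleEndian_ne_zero (mem_filter.mp hi).2
  exact mem_map_of_mem Fin.valEmbedding ((mem_filter_univ j).mpr hj)

theorem transpose_leadingRows_mulVec (C : Matrix (Fin n) (Fin m) (ZMod b)) (k : Fin m → ZMod b) :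
    (leadingRows C)ᵀ *ᵥ k = Cᵀ *ᵥ digitVec b n (littleEndian k) := by
  funext c
  let f (i : ℕ) : ZMod b := if h : i < n then C ⟨i, h⟩ c * ndigit b (littleEndian k) i else 0
  calc ((leadingRows C)ᵀ *ᵥ k) c = ∑ i : Fin m, f i := by
        rw [mulVec, dotProduct]
        refine sum_congr rfl fun i _ => ?_
        by_cases hi : (i : ℕ) < n <;> simp [leadingRows, f, hi, ndigit_littleEndian]
    _ = ∑ i ∈ range m, f i := Fin.sum_univ_eq_sum_range f m
    _ = ∑ i ∈ range n, f i := by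
        refine sum_congr_of_eq_on_inter (fun i _ hi => dif_neg (by simpa using hi))
          (fun i _ hi => ?_) fun _ _ _ => rfl
        simp [f, ndigit_littleEndian_of_le k (not_lt.mp (mem_range.not.mp hi))]
    _ = ∑ i : Fin n, f i := (Fin.sum_univ_eq_sum_range f n).symm
    _ = _ := sum_congr rfl fun i _ => by simp [f, digitVec]

theorem mul_lt_dickWeightV_add {C : Fin s → Matrix (Fin n) (Fin m) (ZMod b)}
    (hC : (α * m : ℤ) - t + 1 ≤ minWeight b α C) {k : Fin s → Fin m → ZMod b}
    (hk : k ∈ dualVectors fun j => leadingRows (C j)) (hk₀ : k ≠ 0) :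
    α * m < dickWeightV b α (fun j => littleEndian (k j)) + t := by
  have hmin : minWeight b α C ≤ dickWeightV b α (fun j => littleEndian (k j)) := by
    refine Nat.sInf_le ⟨_, ⟨?_, fun h => hk₀ ?_⟩, rfl⟩
    · rw [mem_dualVectors] at hk
      simp only [transpose_leadingRows_mulVec] at hk
      exact hk
    · funext j
      rw [← digitVec_littleEndian (k j), congrFun h j]
      funext i
      simp [digitVec, ndigit]
  omega

theorem isDigitalNet_leadingRows (hα : 0 < α) {C : Fin s → Matrix (Fin n) (Fin m) (ZMod b)}
    (hC : (α * m : ℤ) - t + 1 ≤ minWeight b α C) : IsDigitalNet (fun j => leadingRows (C j)) t := by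
  intro k hk hk₀
  have hweight := mul_lt_dickWeightV_add hC hk hk₀
  have hle : dickWeightV b α (fun j => littleEndian (k j)) ≤ α * nrtWeightV k := by
    rw [nrtWeightV, mul_sum]
    exact sum_le_sum fun j _ => dickWeight_littleEndian_le_mul (k j)
  rcases le_or_gt m t with hmt | hmt
  · rw [Nat.sub_eq_zero_of_le hmt]
    exact nrtWeightV_pos hk₀
  · by_contra! hW
    nlinarith [Nat.mul_le_mul_left α hW, Nat.sub_add_cancel hmt.le,
      Nat.mul_le_mul_right t (Nat.succ_le_of_lt hα)]

theorem dickWeight_sub_le {k k' l : Fin m → ZMod b} (h : AgreeBelowTop k l)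
    (h' : AgreeBelowTop k' l) : dickWeight b α (littleEndian (k - k')) ≤
      max (nrtWeight k) (nrtWeight l) + max (nrtWeight k') (nrtWeight l) := by
  refine (dickWeight_littleEndian_le_sum _).trans
    (le_trans ?_ (add_le_add h.sum_ne_le h'.sum_ne_le))
  rw [← sum_union_inter]
  refine (sum_le_sum_of_subset fun i hi => ?_).trans (Nat.le_add_right _ _)
  grind [Pi.sub_apply]

theorem mul_le_jointWeight_add {C : Fin s → Matrix (Fin n) (Fin m) (ZMod b)}
    (hC : (α * m : ℤ) - t + 1 ≤ minWeight b α C) {k k' l : Fin s → Fin m → ZMod b}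
    (hk : k ∈ dualVectors fun j => leadingRows (C j))
    (hk' : k' ∈ dualVectors fun j => leadingRows (C j)) (hne : k ≠ k')
    (h : ∀ j, AgreeBelowTop (k j) (l j)) (h' : ∀ j, AgreeBelowTop (k' j) (l j)) :
    α * m ≤ jointWeight k l + jointWeight k' l + t := by
  have hweight := mul_lt_dickWeightV_add hC (sub_mem_dualVectors hk hk') (sub_ne_zero.mpr hne)
  have hle : dickWeightV b α (fun j => littleEndian ((k - k') j)) ≤
      jointWeight k l + jointWeight k' l := by
    rw [jointWeight, jointWeight, ← sum_add_distrib]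
    exact sum_le_sum fun j _ => dickWeight_sub_le (h j) (h' j)
  omega

theorem min_decay_le {C : Fin s → Matrix (Fin n) (Fin m) (ZMod b)}
    (hC : (α * m : ℤ) - t + 1 ≤ minWeight b α C) {k k' : Fin s → Fin m → ZMod b}
    (hk : k ∈ dualVectors fun j => leadingRows (C j))
    (hk' : k' ∈ dualVectors fun j => leadingRows (C j)) (hne : k ≠ k')
    (l : Fin s → Fin m → ZMod b) :
    min (decay k l) (decay k' l) ≤ √b ^ t / √b ^ (α * m) := by
  have hb : (1 : ℝ) ≤ b := mod_cast NeZero.one_le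
  have hβ : (0 : ℝ) ≤ √b ^ t / √b ^ (α * m) := by positivity
  by_cases h : ∀ j, AgreeBelowTop (k j) (l j)
  swap
  · exact (min_le_left _ _).trans (by rwa [decay, if_neg h])
  by_cases h' : ∀ j, AgreeBelowTop (k' j) (l j)
  swap
  · exact (min_le_right _ _).trans (by rwa [decay, if_neg h'])
  refine le_of_sq_le_sq ?_ hβ
  calc min (decay k l) (decay k' l) ^ 2
      ≤ decay k l * decay k' l := by
        rw [sq]
        exact mul_le_mul (min_le_left _ _) (min_le_right _ _)
          (le_min (decay_nonneg k l) (decay_nonneg k' l)) (decay_nonneg k l)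
    _ = (b : ℝ)⁻¹ ^ (jointWeight k l + jointWeight k' l) := by
        rw [decay, if_pos h, decay, if_pos h', pow_add]
    _ ≤ (b : ℝ) ^ t / b ^ (α * m) := by
        rw [inv_pow, inv_eq_one_div, div_le_div_iff₀ (by positivity) (by positivity), one_mul,
          ← pow_add]
        exact pow_le_pow_right₀ hb ((mul_le_jointWeight_add hC hk hk' hne h h').trans_eq
          (add_comm _ _))
    _ = (√b ^ t / √b ^ (α * m)) ^ 2 := by
        rw [div_pow, pow_right_comm, pow_right_comm _ (α * m), Real.sq_sqrt (by positivity)]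

end DickWeight

section Fibers

variable {b s m n t : ℕ} [NeZero b]

theorem card_fiber_mul_pow_le (A : Fin s → Matrix (Fin n) (Fin m) (ZMod b))
    (q : Fin s → Fin n → ZMod b) :
    #{v | (fun j => A j *ᵥ v) = q} * b ^ (n * s) ≤ #(dualVectors A) * b ^ m := by
  have hb : (0 : ℝ) < b := mod_cast NeZero.pos b
  have fourier : (#{v | (fun j => A j *ᵥ v) = q} : ℂ) / (b : ℂ) ^ m =
      (∑ k ∈ dualVectors A, starRingEnd ℂ (walshCharV k q)) / (b : ℂ) ^ (n * s) := by
    simpa [sum_boole] using poisson_summation A fun x => if x = q then 1 else 0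
  have norm_le : ‖∑ k ∈ dualVectors A, starRingEnd ℂ (walshCharV k q)‖ ≤ #(dualVectors A) := by
    refine (norm_sum_le _ _).trans_eq ?_
    simp [walshCharV, norm_walshChar]
  rw [div_eq_div_iff (mod_cast (pow_pos hb m).ne') (mod_cast (pow_pos hb (n * s)).ne')] at fourier
  have norm_eq := congrArg norm fourier
  simp only [norm_mul, norm_pow, Complex.norm_natCast] at norm_eq
  have : (#{v | (fun j => A j *ᵥ v) = q} : ℝ) * b ^ (n * s) ≤ #(dualVectors A) * b ^ m := by
    rw [norm_eq]
    gcongr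
  exact mod_cast this

theorem IsDigitalNet.coordinate {A : Fin s → Matrix (Fin n) (Fin m) (ZMod b)}
    (hA : IsDigitalNet A t) (j : Fin s) : IsDigitalNet (fun _ : Fin 1 => A j) t := by
  intro k hk hk₀
  have hk' : Pi.single j (k 0) ∈ dualVectors A := by
    rw [mem_dualVectors, Fintype.sum_eq_single j fun i hi => by simp [hi], Pi.single_eq_same]
    rwa [mem_dualVectors, Fin.sum_univ_one] at hk
  have hk₀' : (Pi.single j (k 0) : Fin s → Fin n → ZMod b) ≠ 0 := fun h =>
    hk₀ (funext fun i => Fin.eq_zero i ▸ Pi.single_eq_zero_iff.mp h)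
  have hweight : nrtWeightV (Pi.single j (k 0) : Fin s → Fin n → ZMod b) = nrtWeightV k := by
    rw [nrtWeightV, Fintype.sum_eq_single j fun i hi => by simp [hi, nrtWeight],
      Pi.single_eq_same, nrtWeightV, Fin.sum_univ_one]
  exact hweight ▸ hA _ hk' hk₀'

theorem IsDigitalNet.card_mulVec_eq_le {A : Fin s → Matrix (Fin m) (Fin m) (ZMod b)}
    (hA : IsDigitalNet A t) (j : Fin s) (q : Fin m → ZMod b) : #{v | A j *ᵥ v = q} ≤ b ^ t := by
  have card_dual_le := (hA.coordinate j).card_nrtWeight_le_mul_pow_le (fun _ => m) (by simp)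
  rw [filter_true_of_mem fun k _ i => nrtWeight_le (k i), Fin.sum_univ_one, pow_add] at card_dual_le
  have card_fiber_le := card_fiber_mul_pow_le (fun _ : Fin 1 => A j) fun _ => q
  rw [mul_one, Nat.mul_le_mul_right_iff (pow_pos (NeZero.pos b) m)] at card_fiber_le
  rw [mul_comm, Nat.mul_le_mul_left_iff (pow_pos (NeZero.pos b) m)] at card_dual_le
  simpa only [funext_iff, forall_const] using card_fiber_le.trans card_dual_le

end Fibers

section Discretization

variable {b s m n t : ℕ} [NeZero b]

/-- The `b`-adic interval of the real numbers in `[0, 1)` with leading digits `x`. -/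
def digitInterval (x : Fin m → ZMod b) : Set ℝ :=
  Set.Ico ((bigEndian x : ℕ) / (b : ℝ) ^ m) (((bigEndian x : ℕ) + 1) / (b : ℝ) ^ m)

theorem bigEndian_div_pow (x : Fin m → ZMod b) :
    (bigEndian x : ℕ) / (b : ℝ) ^ m = ∑ i, ((x i).val : ℝ) / (b : ℝ) ^ ((i : ℕ) + 1) := by
  have hb : (b : ℝ) ≠ 0 := NeZero.ne _
  rw [coe_bigEndian, Nat.cast_sum, sum_div]
  refine sum_congr rfl fun i _ => ?_
  rw [Nat.cast_mul, Nat.cast_pow, pow_sub₀ _ hb i.isLt]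
  field_simp

theorem sum_Ico_digit_div_pow_le {d : ℕ → ℕ} (hd : ∀ i, d i < b) {n : ℕ} (hmn : m ≤ n) :
    ∑ i ∈ Ico m n, (d i : ℝ) / (b : ℝ) ^ (i + 1) ≤ 1 / (b : ℝ) ^ m - 1 / (b : ℝ) ^ n := by
  have hb : (0 : ℝ) < b := mod_cast NeZero.pos b
  induction n, hmn using Nat.le_induction with
  | base => simp
  | succ n hmn ih =>
    have hdn : (d n : ℝ) + 1 ≤ b := mod_cast hd n
    have : (d n : ℝ) / (b : ℝ) ^ (n + 1) ≤ 1 / (b : ℝ) ^ n - 1 / (b : ℝ) ^ (n + 1) := by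
      rw [pow_succ, le_sub_iff_add_le, ← add_div,
        div_le_div_iff₀ (by positivity) (by positivity), one_mul, mul_comm]
      gcongr
    rw [sum_Ico_succ_top hmn]
    linarith

theorem sum_digit_mem_digitInterval (C : Matrix (Fin n) (Fin m) (ZMod b)) (v : Fin m → ZMod b) :
    ∑ i, (((C *ᵥ v) i).val : ℝ) / (b : ℝ) ^ ((i : ℕ) + 1) ∈ digitInterval (leadingRows C *ᵥ v) := by
  have hb : (0 : ℝ) < b := mod_cast NeZero.pos b
  let d (i : ℕ) : ℕ := if h : i < n then ((C *ᵥ v) ⟨i, h⟩).val else 0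
  have leading : ((bigEndian (leadingRows C *ᵥ v) : ℕ) : ℝ) / (b : ℝ) ^ m =
      ∑ i ∈ range m, (d i : ℝ) / (b : ℝ) ^ (i + 1) := by
    rw [bigEndian_div_pow, ← Fin.sum_univ_eq_sum_range fun i => (d i : ℝ) / (b : ℝ) ^ (i + 1)]
    refine sum_congr rfl fun i _ => ?_
    rw [leadingRows_mulVec, apply_dite ZMod.val, ZMod.val_zero]
  have all : ∑ i, (((C *ᵥ v) i).val : ℝ) / (b : ℝ) ^ ((i : ℕ) + 1) =
      ∑ i ∈ range (m + n), (d i : ℝ) / (b : ℝ) ^ (i + 1) := by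
    rw [← sum_subset (range_mono (Nat.le_add_left n m)) fun i _ hi => by simp_all [d],
      ← Fin.sum_univ_eq_sum_range fun i => (d i : ℝ) / (b : ℝ) ^ (i + 1)]
    exact sum_congr rfl fun i _ => by simp only [d, i.isLt, dif_pos]
  have tail := sum_Ico_digit_div_pow_le (d := d) (fun i => by
    unfold d; split_ifs; exacts [ZMod.val_lt _, NeZero.pos b]) (Nat.le_add_right m n)
  have tail_nonneg : 0 ≤ ∑ i ∈ Ico m (m + n), (d i : ℝ) / (b : ℝ) ^ (i + 1) := by positivity
  have : 0 < 1 / (b : ℝ) ^ (m + n) := by positivity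
  rw [all, digitInterval, add_div, leading, ← sum_range_add_sum_Ico _ (Nat.le_add_right m n)]
  constructor <;> linarith

theorem bigEndian_le_of_lt {x q : Fin m → ZMod b} {p y : ℝ} (hp : p ∈ digitInterval x)
    (hy : y ∈ digitInterval q) (hpy : p < y) : bigEndian x ≤ bigEndian q := by
  have hb : (0 : ℝ) < b := mod_cast NeZero.pos b
  have hlt := hp.1.trans_lt (hpy.trans hy.2)
  rw [div_lt_div_iff_of_pos_right (by positivity)] at hlt
  exact Fin.le_def.mpr (Nat.le_of_lt_succ (mod_cast hlt))

theorem lt_of_bigEndian_lt {x q : Fin m → ZMod b} {p y : ℝ} (hp : p ∈ digitInterval x)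
    (hy : y ∈ digitInterval q) (hxq : bigEndian x < bigEndian q) : p < y := by
  refine hp.2.trans_le (le_trans ?_ hy.1)
  gcongr
  exact mod_cast Nat.succ_le_of_lt hxq

theorem prod_sub_prod_le {ι : Type*} (S : Finset ι) {y c : ι → ℝ} (hy : ∀ i, 0 ≤ y i)
    (hyc : ∀ i, y i ≤ c i) (hc : ∀ i, c i ≤ 1) :
    ∏ i ∈ S, c i - ∏ i ∈ S, y i ≤ ∑ i ∈ S, (c i - y i) := by
  classical
  induction S using Finset.induction_on with
  | empty => simp
  | insert i S hi ih =>
    have prod_le : ∏ i ∈ S, c i ≤ 1 := prod_le_one (fun i _ => (hy i).trans (hyc i)) fun i _ => hc i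
    have prod_mono : ∏ i ∈ S, y i ≤ ∏ i ∈ S, c i :=
      prod_le_prod (fun i _ => hy i) fun i _ => hyc i
    rw [prod_insert hi, prod_insert hi, sum_insert hi]
    calc c i * ∏ i ∈ S, c i - y i * ∏ i ∈ S, y i
        = (c i - y i) * ∏ i ∈ S, c i + y i * (∏ i ∈ S, c i - ∏ i ∈ S, y i) := by ring
      _ ≤ (c i - y i) + (∏ i ∈ S, c i - ∏ i ∈ S, y i) := add_le_add
          (mul_le_of_le_one_right (sub_nonneg.mpr (hyc i)) prod_le)
          (mul_le_of_le_one_left (sub_nonneg.mpr prod_mono) ((hyc i).trans (hc i)))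
      _ ≤ (c i - y i) + ∑ i ∈ S, (c i - y i) := by gcongr

theorem IsDigitalNet.card_box_sub_card_le {A : Fin s → Matrix (Fin m) (Fin m) (ZMod b)}
    (hA : IsDigitalNet A t) {p : (Fin m → ZMod b) → Fin s → ℝ}
    (hp : ∀ v j, p v j ∈ digitInterval (A j *ᵥ v)) {q : Fin s → Fin m → ZMod b} {y : Fin s → ℝ}
    (hy : ∀ j, y j ∈ digitInterval (q j)) :
    #{v | ∀ j, p v j < y j} ≤ #{v | ∀ j, bigEndian (A j *ᵥ v) ≤ bigEndian (q j)} ∧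
      #{v | ∀ j, bigEndian (A j *ᵥ v) ≤ bigEndian (q j)} ≤ #{v | ∀ j, p v j < y j} + s * b ^ t := by
  constructor
  · exact card_le_card fun v hv => (mem_filter_univ v).mpr fun j =>
      bigEndian_le_of_lt (hp v j) (hy j) ((mem_filter_univ v).mp hv j)
  · calc #{v | ∀ j, bigEndian (A j *ᵥ v) ≤ bigEndian (q j)}
        ≤ #(({v | ∀ j, p v j < y j} : Finset _) ∪ univ.biUnion fun j => {v | A j *ᵥ v = q j}) := by
          refine card_le_card fun v hv => ?_
          have hv := (mem_filter_univ v).mp hv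
          simp only [mem_union, mem_filter_univ, mem_biUnion, mem_univ, true_and]
          by_contra! hne
          obtain ⟨⟨j, hj⟩, hne⟩ := hne
          exact hj.not_gt (lt_of_bigEndian_lt (hp v j) (hy j)
            ((hv j).lt_of_ne (bigEndian.injective.ne (hne j))))
      _ ≤ #{v | ∀ j, p v j < y j} + ∑ j, #{v | A j *ᵥ v = q j} :=
          (card_union_le _ _).trans (Nat.add_le_add_left card_biUnion_le _)
      _ ≤ #{v | ∀ j, p v j < y j} + s * b ^ t := by
          gcongr
          exact (sum_le_sum fun j _ => hA.card_mulVec_eq_le j (q j)).trans_eq (by simp)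

theorem IsDigitalNet.abs_sub_boxDiscrepancy_le {A : Fin s → Matrix (Fin m) (Fin m) (ZMod b)}
    (hA : IsDigitalNet A t) {p : (Fin m → ZMod b) → Fin s → ℝ}
    (hp : ∀ v j, p v j ∈ digitInterval (A j *ᵥ v)) {q : Fin s → Fin m → ZMod b} {y : Fin s → ℝ}
    (hy : ∀ j, y j ∈ digitInterval (q j)) :
    |#{v | ∀ j, p v j < y j} / (b : ℝ) ^ m - ∏ j, y j - boxDiscrepancy A q| ≤
      s * (b ^ t + 1) / (b : ℝ) ^ m := by
  have hb : (0 : ℝ) < b := mod_cast NeZero.pos b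
  have hy₀ (j) : 0 ≤ y j := le_trans (by positivity) (hy j).1
  obtain ⟨card_le, card_ge⟩ := hA.card_box_sub_card_le hp hy
  have count_le : (#{v | ∀ j, p v j < y j} : ℝ) / (b : ℝ) ^ m ≤
      #{v | ∀ j, bigEndian (A j *ᵥ v) ≤ bigEndian (q j)} / (b : ℝ) ^ m := by gcongr
  have count_ge : #{v | ∀ j, bigEndian (A j *ᵥ v) ≤ bigEndian (q j)} / (b : ℝ) ^ m ≤
      (#{v | ∀ j, p v j < y j} : ℝ) / (b : ℝ) ^ m + s * b ^ t / (b : ℝ) ^ m := by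
    rw [← add_div]
    gcongr
    exact mod_cast card_ge
  have corner_le_one (j) : ((bigEndian (q j) : ℕ) + 1) / (b : ℝ) ^ m ≤ 1 := by
    rw [div_le_one (by positivity)]
    exact mod_cast (bigEndian (q j)).isLt
  have volume_le : ∏ j, y j ≤ ∏ j, ((bigEndian (q j) : ℕ) + 1 : ℝ) / (b : ℝ) ^ m :=
    prod_le_prod (fun j _ => hy₀ j) fun j _ => (hy j).2.le
  have volume_ge : ∏ j, ((bigEndian (q j) : ℕ) + 1 : ℝ) / (b : ℝ) ^ m - ∏ j, y j ≤
      s / (b : ℝ) ^ m := by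
    refine (prod_sub_prod_le univ hy₀ (fun j => (hy j).2.le) corner_le_one).trans
      ((sum_le_card_nsmul _ _ (1 / (b : ℝ) ^ m) fun j _ => ?_).trans_eq (by simp [div_eq_mul_inv]))
    rw [add_div, sub_le_iff_le_add']
    exact add_le_add_left (hy j).1 _
  rw [boxDiscrepancy, mul_add, mul_one, add_div, abs_le]
  constructor <;> linarith

/-- The cell of the regular grid of mesh `b ^ (-m)` with digits `q`. -/
def gridCell (q : Fin s → Fin m → ZMod b) : Set (Fin s → ℝ) :=
  Set.univ.pi fun j => digitInterval (q j)

theorem volume_gridCell (q : Fin s → Fin m → ZMod b) :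
    volume (gridCell q) = ENNReal.ofReal (1 / (b : ℝ) ^ (m * s)) := by
  rw [gridCell, volume_pi, Measure.pi_pi]
  simp only [digitInterval, Real.volume_Ico, ← sub_div, add_sub_cancel_left, prod_const, card_univ,
    Fintype.card_fin]
  rw [← ENNReal.ofReal_pow (by positivity), _root_.one_div_pow, pow_mul]

theorem measurableSet_gridCell (q : Fin s → Fin m → ZMod b) : MeasurableSet (gridCell q) :=
  MeasurableSet.univ_pi fun _ => measurableSet_Ico

theorem integrable_indicator_gridCell (q : Fin s → Fin m → ZMod b) (c : ℝ) :
    Integrable ((gridCell q).indicator fun _ => c) :=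
  (integrable_indicator_iff (measurableSet_gridCell q)).mpr
    (integrableOn_const (by rw [volume_gridCell]; exact ENNReal.ofReal_ne_top))

theorem integral_indicator_gridCell (q : Fin s → Fin m → ZMod b) (c : ℝ) :
    ∫ y, (gridCell q).indicator (fun _ => c) y = c / (b : ℝ) ^ (m * s) := by
  rw [integral_indicator (measurableSet_gridCell q), setIntegral_const, measureReal_def,
    volume_gridCell, ENNReal.toReal_ofReal (by positivity), smul_eq_mul, div_mul_eq_mul_div,
    one_mul]

theorem exists_mem_digitInterval (m : ℕ) {y : ℝ} (hy : y ∈ Set.Ico (0 : ℝ) 1) :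
    ∃ x : Fin m → ZMod b, y ∈ digitInterval x := by
  have hbm : (0 : ℝ) < (b : ℝ) ^ m := pow_pos (mod_cast NeZero.pos b) m
  have hlt : ⌊y * (b : ℝ) ^ m⌋₊ < b ^ m := by
    rw [Nat.floor_lt (mul_nonneg hy.1 hbm.le)]
    push_cast
    exact mul_lt_of_lt_one_left hbm hy.2
  refine ⟨bigEndian.symm ⟨_, hlt⟩, ?_⟩
  rw [digitInterval, Equiv.apply_symm_apply, Set.mem_Ico, div_le_iff₀ hbm, lt_div_iff₀ hbm]
  exact ⟨Nat.floor_le (mul_nonneg hy.1 hbm.le), Nat.lt_floor_add_one _⟩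

theorem integral_cube_le {f : (Fin s → ℝ) → ℝ} {g : (Fin s → Fin m → ZMod b) → ℝ}
    (hf : ∀ y, 0 ≤ f y) (hg : ∀ q, 0 ≤ g q) (hfg : ∀ q, ∀ y ∈ gridCell q, f y ≤ g q) :
    ∫ y in cube s, f y ≤ (∑ q, g q) / (b : ℝ) ^ (m * s) := by
  have ae_eq_cube : (Set.univ.pi fun _ : Fin s => Set.Ico (0 : ℝ) 1) =ᵐ[volume] cube s := by
    rw [cube, Set.pi_univ_Icc]
    exact Measure.univ_pi_Ico_ae_eq_Icc
  have indicator_nonneg (q : Fin s → Fin m → ZMod b) (y : Fin s → ℝ) :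
      0 ≤ (gridCell q).indicator (fun _ => g q) y := Set.indicator_nonneg (fun _ _ => hg q) y
  have integrable_sum := integrable_finsetSum univ fun q _ => integrable_indicator_gridCell q (g q)
  rw [← setIntegral_congr_set ae_eq_cube]
  calc ∫ y in Set.univ.pi fun _ : Fin s => Set.Ico (0 : ℝ) 1, f y
      ≤ ∫ y in Set.univ.pi fun _ : Fin s => Set.Ico (0 : ℝ) 1,
          ∑ q, (gridCell q).indicator (fun _ => g q) y := by
        refine integral_mono_of_nonneg (.of_forall hf) integrable_sum.integrableOn
          (ae_restrict_of_forall_mem (MeasurableSet.univ_pi fun _ => measurableSet_Ico)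
            fun y hy => ?_)
        choose q hq using fun j => exists_mem_digitInterval (b := b) m (hy j trivial)
        have hyq : y ∈ gridCell q := fun j _ => hq j
        calc f y ≤ (gridCell q).indicator (fun _ => g q) y := by
              rw [Set.indicator_of_mem hyq]
              exact hfg q y hyq
          _ ≤ _ := single_le_sum (fun q _ => indicator_nonneg q y) (mem_univ q)
    _ ≤ ∫ y, ∑ q, (gridCell q).indicator (fun _ => g q) y :=
        setIntegral_le_integral integrable_sum
          (.of_forall fun y => sum_nonneg fun q _ => indicator_nonneg q y)
    _ = (∑ q, g q) / (b : ℝ) ^ (m * s) := by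
        rw [integral_finsetSum _ fun q _ => integrable_indicator_gridCell q (g q), sum_div]
        exact sum_congr rfl fun q _ => integral_indicator_gridCell q (g q)

theorem sq_le_two_mul_of_abs_sub_le {x y ε : ℝ} (h : |x - y| ≤ ε) :
    x ^ 2 ≤ 2 * (y ^ 2 + ε ^ 2) := by
  nlinarith [sq_le_sq' (neg_le_of_abs_le h) (le_of_abs_le h), sq_nonneg (x - 2 * y)]

theorem sqL2_netPoint_le {C : Fin s → Matrix (Fin n) (Fin m) (ZMod b)}
    (hC : IsDigitalNet (fun j => leadingRows (C j)) t) :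
    sqL2 (b ^ m) (netPoint b C) ≤
      2 * ((∑ q, boxDiscrepancy (fun j => leadingRows (C j)) q ^ 2) / (b : ℝ) ^ (m * s)) +
        2 * (s * (b ^ t + 1) / (b : ℝ) ^ m) ^ 2 := by
  have hb : (b : ℝ) ≠ 0 := NeZero.ne _
  let p (v : Fin m → ZMod b) (j : Fin s) : ℝ :=
    ∑ i, (((C j *ᵥ v) i).val : ℝ) / (b : ℝ) ^ ((i : ℕ) + 1)
  have hp₀ (v j) : 0 ≤ p v j := by positivity
  have hp (v j) : p v j ∈ digitInterval (leadingRows (C j) *ᵥ v) :=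
    sum_digit_mem_digitInterval (C j) v
  refine (integral_cube_le (m := m) (b := b) (g := fun q =>
    2 * (boxDiscrepancy (fun j => leadingRows (C j)) q ^ 2 + (s * (b ^ t + 1) / (b : ℝ) ^ m) ^ 2))
    (fun y => sq_nonneg _) (fun q => by positivity) fun q y hy => ?_).trans_eq ?_
  · have hy := hC.abs_sub_boxDiscrepancy_le hp fun j => hy j trivial
    have count : ∑ h ∈ range (b ^ m), (if ∀ j, 0 ≤ netPoint b C h j ∧ netPoint b C h j < y j
        then (1 : ℝ) else 0) = #{v | ∀ j, p v j < y j} := by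
      rw [← sum_boole, ← sum_range_digitVec]
      simp only [hp₀, true_and, netPoint, p]
    rw [count, Nat.cast_pow]
    exact sq_le_two_mul_of_abs_sub_le hy
  · simp only [← mul_sum, sum_add_distrib, sum_const, card_univ, Fintype.card_fun, ZMod.card,
      Fintype.card_fin, nsmul_eq_mul, Nat.cast_pow, ← pow_mul]
    field_simp

end Discretization

section Asymptotics

theorem exists_add_one_pow_le_mul_pow (p : ℕ) {ρ : ℝ} (hρ : 1 < ρ) :
    ∃ K : ℝ, ∀ m : ℕ, ((m : ℝ) + 1) ^ p ≤ K * ρ ^ m := by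
  obtain ⟨K, hK⟩ := (tendsto_pow_const_div_const_pow_of_one_lt p hρ).bddAbove_range
  refine ⟨K * ρ, fun m => ?_⟩
  have := hK ⟨m + 1, rfl⟩
  rwa [div_le_iff₀ (by positivity), Nat.cast_succ, pow_succ', ← mul_assoc] at this

theorem exists_sum_sq_boxDiscrepancy_le {b : ℕ} [NeZero b] (hb : 1 < b) (s t : ℕ) :
    ∃ D : ℝ, 0 < D ∧ ∀ m, ∀ A : Fin (s + 1) → Matrix (Fin m) (Fin m) (ZMod b), IsDigitalNet A t →
      (∀ k ∈ dualVectors A, ∀ k' ∈ dualVectors A, k ≠ k' → ∀ l,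
        min (decay k l) (decay k' l) ≤ √b ^ t / √b ^ (3 * m)) →
      (∑ q, boxDiscrepancy A q ^ 2) / (b : ℝ) ^ (m * (s + 1)) ≤
        D * ((m : ℝ) + 1) ^ s / (b : ℝ) ^ (2 * m) := by
  have hb₀ : (0 : ℝ) < b := mod_cast NeZero.pos b
  obtain ⟨K, hK⟩ := exists_add_one_pow_le_mul_pow (2 * (s + 1))
    (Real.lt_sqrt_of_sq_lt (by simpa using hb) : 1 < √(b : ℝ))
  have hK₀ : 0 < K := one_pos.trans_le (by simpa using hK 0)
  refine ⟨(b : ℝ) ^ (2 * (s + 1)) * (2 * b) ^ (s + 1) *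
    (2 * (b ^ t) ^ 2 + 2 * √b ^ t * b ^ t * b ^ (s + 1) * K), by positivity, fun m A hA hmin => ?_⟩
  have sqrt_pow : √(b : ℝ) ^ (3 * m) * b ^ m = √b ^ m * b ^ (2 * m) := by
    nth_rw 2 [← Real.sq_sqrt hb₀.le]
    nth_rw 4 [← Real.sq_sqrt hb₀.le]
    ring
  have one_le : (1 : ℝ) ≤ (m + 1) ^ s := one_le_pow₀ (by simp)
  refine (hA.sum_sq_boxDiscrepancy_le hb (by positivity) hmin).trans ?_
  rw [mul_assoc (_ * _), mul_div_assoc]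
  gcongr
  calc 2 * ((m : ℝ) + 1) ^ s * ((b : ℝ) ^ t / b ^ m) ^ 2 + 2 * (√b ^ t / √b ^ (3 * m)) *
        ((b * (m + 1)) ^ (s + 1) * (m + 1) ^ (s + 1) * (b ^ t / b ^ m))
      = 2 * (b ^ t) ^ 2 * ((m + 1) ^ s / b ^ (2 * m)) +
          2 * √b ^ t * b ^ t * b ^ (s + 1) *
            ((m + 1) ^ (2 * (s + 1)) / (√b ^ (3 * m) * b ^ m)) := by
        rw [mul_pow (b : ℝ)]
        field_simp
        ring
    _ ≤ 2 * (b ^ t) ^ 2 * ((m + 1) ^ s / b ^ (2 * m)) +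
          2 * √b ^ t * b ^ t * b ^ (s + 1) * (K * ((m + 1) ^ s / b ^ (2 * m))) := by
        gcongr
        rw [sqrt_pow, div_mul_eq_div_div, mul_div_assoc']
        gcongr
        rw [div_le_iff₀ (by positivity)]
        exact (hK m).trans <| by gcongr; exact le_mul_of_one_le_right hK₀.le one_le
    _ = (2 * (b ^ t) ^ 2 + 2 * √b ^ t * b ^ t * b ^ (s + 1) * K) * (m + 1) ^ s /
          b ^ (2 * m) := by ring

end Asymptotics

end DigitalNet

end

theorem stmt_13_general (b α s t : ℕ) (hb : 2 ≤ b) (hα : 3 ≤ α) (hs : 0 < s) :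
    ∃ D : ℝ, 0 < D ∧
      ∀ m : ℕ, 0 < m → ∀ n : ℕ, ∀ C : Fin s → Matrix (Fin n) (Fin m) (ZMod b),
        (α * m : ℤ) - t + 1 ≤ minWeight b α C →
        sqL2 (b ^ m) (netPoint b C) ≤ D * (m : ℝ) ^ (s - 1) / (b : ℝ) ^ (2 * m) := by
  have : NeZero b := ⟨by omega⟩
  obtain ⟨s, rfl⟩ := Nat.exists_eq_add_of_le' hs
  obtain ⟨D, hD, grid_bound⟩ := DigitalNet.exists_sum_sq_boxDiscrepancy_le hb s t
  let E : ℝ := (s + 1 : ℕ) * (b ^ t + 1)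
  refine ⟨2 * (D * 2 ^ s) + 2 * E ^ 2, by positivity, fun m hm n C hC => ?_⟩
  have hnet := DigitalNet.isDigitalNet_leadingRows (by omega) hC
  have hm' : (1 : ℝ) ≤ m := mod_cast hm
  have hb₁ : (1 : ℝ) ≤ √b := Real.one_le_sqrt.mpr (mod_cast NeZero.one_le)
  have pow_div_le : √(b : ℝ) ^ t / √b ^ (α * m) ≤ √b ^ t / √b ^ (3 * m) := by gcongr
  calc sqL2 (b ^ m) (netPoint b C)
      ≤ 2 * (D * ((m : ℝ) + 1) ^ s / (b : ℝ) ^ (2 * m)) + 2 * (E / (b : ℝ) ^ m) ^ 2 :=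
        (DigitalNet.sqL2_netPoint_le hnet).trans <| add_le_add_left (mul_le_mul_of_nonneg_left
          (grid_bound m _ hnet fun k hk k' hk' hne l =>
            (DigitalNet.min_decay_le hC hk hk' hne l).trans pow_div_le)
          zero_le_two) _
    _ ≤ 2 * (D * (2 * m) ^ s / (b : ℝ) ^ (2 * m)) + 2 * (E / (b : ℝ) ^ m) ^ 2 * m ^ s := by
        refine add_le_add (by gcongr; linarith) ?_
        exact le_mul_of_one_le_right (by positivity) (one_le_pow₀ hm')
    _ = (2 * (D * 2 ^ s) + 2 * E ^ 2) * (m : ℝ) ^ (s + 1 - 1) / (b : ℝ) ^ (2 * m) := by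
        rw [Nat.add_sub_cancel]
        ring

/-- Theorem 5.5: the squared `L_2`-discrepancy of an order `3` digital `(t_3,m,s)`-net
over `F_2` is of order `m^{s-1}/2^{2m}`. -/
theorem stmt_13 (s : ℕ) (hs : 0 < s) (t₃ : ℕ) :
    ∃ D : ℝ, 0 < D ∧
      ∀ m : ℕ, 0 < m → ∀ n : ℕ, ∀ C : Fin s → Matrix (Fin n) (Fin m) (ZMod 2),
        (3 * m : ℤ) - t₃ + 1 ≤ minWeight 2 3 C →
        sqL2 (2 ^ m) (netPoint 2 C) ≤ D * (m : ℝ) ^ (s - 1) / 2 ^ (2 * m) :=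
  stmt_13_general 2 3 s t₃ le_rfl le_rfl hs
end

section
/- Let b be a prime and let alpha, beta be integers with 1 < alpha < beta. Then for every s in N and every k in N_0^s, mu_alpha(k) >= ((alpha-1)/(beta-1)) mu_beta(k) + ((beta-alpha)/(beta-1)) mu_1(k). -/
open MeasureTheory Finset Matrix

/-!
Padding the exponents `c_1 > ⋯ > c_v` of the expansion of `k` with zeros gives a nonincreasing
sequence whose partial sums are the weights `μ_0(k), μ_1(k), …`; summing over the coordinates
keeps it nonincreasing. So `α ↦ μ_α(k)` is concave, and the interpolation inequality says that it
lies above its chord between `1` and `β`.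
-/

theorem nsmul_sum_range_add_nsmul_sum_range_le_of_antitone {M : Type*} [AddCommMonoid M]
    [PartialOrder M] [IsOrderedAddMonoid M] {f : ℕ → M} (hf : Antitone f) (l m n : ℕ) :
    m • ∑ i ∈ range (l + m + n), f i + n • ∑ i ∈ range l, f i ≤
      (m + n) • ∑ i ∈ range (l + m), f i := by
  have tail_le : ∑ i ∈ range n, f (l + m + i) ≤ n • f (l + m) := by
    simpa only [card_range] using
      sum_le_card_nsmul (range n) (fun i ↦ f (l + m + i)) _ fun i _ ↦ hf (Nat.le_add_right _ i)
  have le_middle : m • f (l + m) ≤ ∑ i ∈ range m, f (l + i) := by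
    simpa only [card_range] using
      card_nsmul_le_sum (range m) (fun i ↦ f (l + i)) _ fun i hi ↦
        hf (Nat.add_le_add_left (mem_range.1 hi).le l)
  have key : m • ∑ i ∈ range n, f (l + m + i) ≤ n • ∑ i ∈ range m, f (l + i) :=
    calc
      m • ∑ i ∈ range n, f (l + m + i) ≤ m • n • f (l + m) := nsmul_le_nsmul_right tail_le m
      _ = n • m • f (l + m) := smul_comm m n _
      _ ≤ n • ∑ i ∈ range m, f (l + i) := nsmul_le_nsmul_right le_middle n
  calc
    m • ∑ i ∈ range (l + m + n), f i + n • ∑ i ∈ range l, f i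
      = m • ∑ i ∈ range (l + m), f i + n • ∑ i ∈ range l, f i +
          m • ∑ i ∈ range n, f (l + m + i) := by
        rw [sum_range_add f (l + m), nsmul_add, add_right_comm]
    _ ≤ m • ∑ i ∈ range (l + m), f i + n • ∑ i ∈ range l, f i +
          n • ∑ i ∈ range m, f (l + i) := by gcongr
    _ = (m + n) • ∑ i ∈ range (l + m), f i := by
        rw [add_assoc, ← nsmul_add, ← sum_range_add, add_nsmul]

theorem sum_take_eq_sum_range_getD {M : Type*} [AddCommMonoid M] (L : List M) (n : ℕ) :
    (L.take n).sum = ∑ i ∈ range n, L.getD i 0 := by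
  induction n with
  | zero => simp
  | succ n ih =>
    rw [List.take_add_one, List.sum_append, ih, sum_range_succ, List.getD_eq_getElem?_getD]
    cases L[n]? <;> simp

theorem antitone_getD_of_sortedGE {α : Type*} [Preorder α] {L : List α} (hL : L.SortedGE) {d : α}
    (hd : ∀ x ∈ L, d ≤ x) : Antitone fun i ↦ L.getD i d := by
  intro i j hij
  dsimp only
  rcases lt_or_ge j L.length with hj | hj
  · rw [List.getD_eq_getElem _ _ hj, List.getD_eq_getElem _ _ (hij.trans_lt hj)]
    exact hL.getElem_ge_getElem_of_le hij
  · rw [List.getD_eq_default _ _ hj]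
    rcases lt_or_ge i L.length with hi | hi
    · rw [List.getD_eq_getElem _ _ hi]
      exact hd _ (List.getElem_mem hi)
    · rw [List.getD_eq_default _ _ hi]

theorem sortedGE_nzPos (b k : ℕ) : (nzPos b k).SortedGE :=
  (sortedLT_sort _).sortedLE.reverse

/-- The exponent `c_{i+1}` in the expansion `k = κ_1 b^{c_1-1} + ⋯ + κ_v b^{c_v-1}` with
`c_1 > ⋯ > c_v > 0`, extended by `0` for `i ≥ v`, so that `μ_α(k) = c_1 + ⋯ + c_α` for all `α`. -/
def nzExponent (b k i : ℕ) : ℕ := ((nzPos b k).map (· + 1)).getD i 0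

theorem antitone_nzExponent (b k : ℕ) : Antitone (nzExponent b k) := by
  have sorted : ((nzPos b k).map (· + 1)).SortedGE :=
    (List.pairwise_map.2 <| (sortedGE_nzPos b k).pairwise.imp fun h ↦
      Nat.add_le_add_right h 1).sortedGE
  exact antitone_getD_of_sortedGE sorted fun _ _ ↦ Nat.zero_le _

theorem dickWeight_eq_sum_nzExponent (b α k : ℕ) :
    dickWeight b α k = ∑ i ∈ range α, nzExponent b k i := by
  rw [dickWeight, List.map_take, sum_take_eq_sum_range_getD]
  rfl

theorem dickWeightV_eq_sum_sum_nzExponent (b α : ℕ) {s : ℕ} (k : Fin s → ℕ) :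
    dickWeightV b α k = ∑ i ∈ range α, ∑ j, nzExponent b (k j) i := by
  simp only [dickWeightV, dickWeight_eq_sum_nzExponent]
  exact sum_comm

theorem dickWeightV_concave (b l m n : ℕ) {s : ℕ} (k : Fin s → ℕ) :
    m * dickWeightV b (l + m + n) k + n * dickWeightV b l k ≤
      (m + n) * dickWeightV b (l + m) k := by
  have anti : Antitone fun i ↦ ∑ j, nzExponent b (k j) i := fun _ _ h ↦
    sum_le_sum fun j _ ↦ antitone_nzExponent b (k j) h
  simpa only [dickWeightV_eq_sum_sum_nzExponent, smul_eq_mul] using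
    nsmul_sum_range_add_nsmul_sum_range_le_of_antitone anti l m n

theorem stmt_16_general (b : ℕ) {γ α β : ℕ} (hγα : γ ≤ α) (hαβ : α < β) {s : ℕ}
    (k : Fin s → ℕ) :
    ((α : ℝ) - γ) / ((β : ℝ) - γ) * (dickWeightV b β k : ℝ)
      + ((β : ℝ) - α) / ((β : ℝ) - γ) * (dickWeightV b γ k : ℝ)
      ≤ (dickWeightV b α k : ℝ) := by
  have hpos : (0 : ℝ) < β - γ := sub_pos.2 (mod_cast hγα.trans_lt hαβ)
  obtain ⟨m, rfl⟩ := Nat.exists_eq_add_of_le hγα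
  obtain ⟨n, rfl⟩ := Nat.exists_eq_add_of_le hαβ.le
  have concave : (m : ℝ) * dickWeightV b (γ + m + n) k + n * dickWeightV b γ k ≤
      (m + n) * dickWeightV b (γ + m) k := mod_cast dickWeightV_concave b γ m n k
  rw [div_mul_eq_mul_div, div_mul_eq_mul_div, ← add_div, div_le_iff₀ hpos]
  push_cast
  linarith

/-- Lemma 6.3 (interpolation of weight functions): for `1 < α < β`,
`μ_α(k) ≥ ((α-1)/(β-1)) μ_β(k) + ((β-α)/(β-1)) μ_1(k)`. -/
theorem stmt_16 (b : ℕ) (hb : b.Prime) (α β : ℕ) (hα : 1 < α) (hαβ : α < β)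
    (s : ℕ) (k : Fin s → ℕ) :
    ((α : ℝ) - 1) / ((β : ℝ) - 1) * (dickWeightV b β k : ℝ)
      + ((β : ℝ) - (α : ℝ)) / ((β : ℝ) - 1) * (dickWeightV b 1 k : ℝ)
      ≤ (dickWeightV b α k : ℝ) := by
  exact_mod_cast stmt_16_general b hα.le hαβ k
end
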